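/- Let u ∈ C²(ℝⁿ) satisfy ℐu(x) = 0 for every x ∈ ℝⁿ, and assume that |u(x)| ≤ K(1 + |x|^κ) for all x ∈ ℝⁿ, for some K ≥ 0 and κ ∈ [0, 2s). Then u is an affine function, i.e. u(x) = ϖ · x + c for some ϖ ∈ ℝⁿ and c ∈ ℝ. If in addition κ < 1, then ϖ = 0 and u is constant. -/

import Mathlib

open MeasureTheory
open scoped RealInnerProductSpace

/-- The anisotropic integro-differential operator
`ℐu(x) = ∫_{S^{n-1} × ℝ} (u(x + rϑ) + u(x − rϑ) − 2u(x)) dμ(ϑ) dr / |r|^{1+2s}`. -/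
noncomputable def opI (n : ℕ) (s : ℝ)
    (μ : Measure (Metric.sphere (0 : EuclideanSpace ℝ (Fin n)) 1))
    (u : EuclideanSpace ℝ (Fin n) → ℝ) (x : EuclideanSpace ℝ (Fin n)) : ℝ :=
  ∫ p : Metric.sphere (0 : EuclideanSpace ℝ (Fin n)) 1 × ℝ,
    (u (x + p.2 • (p.1 : EuclideanSpace ℝ (Fin n))) +
      u (x - p.2 • (p.1 : EuclideanSpace ℝ (Fin n))) - 2 * u x) / |p.2| ^ (1 + 2 * s)
    ∂(μ.prod volume)

section Helpers

open Filter Topology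
open scoped FourierTransform SchwartzMap ContDiff

section Basic

variable {V : Type*} [NormedAddCommGroup V]

/-- The symmetric second difference `v (x + y) + v (x - y) - 2 v x`. -/
def secondDiff (v : V → ℂ) (y x : V) : ℂ := v (x + y) + v (x - y) - 2 * v x

lemma one_add_mul_norm_add_le {δ : ℝ} (hδ : 0 ≤ δ) (x y : V) :
    1 + δ * ‖x + y‖ ≤ (1 + δ * ‖x‖) * (1 + δ * ‖y‖) := by
  have h := mul_le_mul_of_nonneg_left (norm_add_le x y) hδ
  have h2 : 0 ≤ (δ * ‖x‖) * (δ * ‖y‖) := by positivity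
  nlinarith

lemma one_add_mul_norm_add_rpow_le {δ κ : ℝ} (hδ : 0 ≤ δ) (hκ : 0 ≤ κ) (x y : V) :
    (1 + δ * ‖x + y‖) ^ κ ≤ (1 + δ * ‖x‖) ^ κ * (1 + δ * ‖y‖) ^ κ := by
  rw [← Real.mul_rpow (by positivity) (by positivity)]
  exact Real.rpow_le_rpow (by positivity) (one_add_mul_norm_add_le hδ x y) hκ

lemma one_add_mul_norm_sub_rpow_le {δ κ : ℝ} (hδ : 0 ≤ δ) (hκ : 0 ≤ κ) (x y : V) :
    (1 + δ * ‖x - y‖) ^ κ ≤ (1 + δ * ‖x‖) ^ κ * (1 + δ * ‖y‖) ^ κ := by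
  simpa [sub_eq_add_neg] using one_add_mul_norm_add_rpow_le hδ hκ x (-y)

lemma one_add_norm_sub_rpow_le {κ : ℝ} (hκ : 0 ≤ κ) (x y : V) :
    (1 + ‖x - y‖) ^ κ ≤ (1 + ‖x‖) ^ κ * (1 + ‖y‖) ^ κ := by
  simpa using one_add_mul_norm_sub_rpow_le zero_le_one hκ x y

lemma one_le_one_add_norm_rpow {κ : ℝ} (hκ : 0 ≤ κ) (x : V) : 1 ≤ (1 + ‖x‖) ^ κ :=
  Real.one_le_rpow (by linarith [norm_nonneg x]) hκ

variable [MeasurableSpace V]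

/-- The symmetrised convolution of `v` with `τ`. -/
noncomputable def symmConv (τ : Measure V) (v : V → ℂ) (x : V) : ℂ :=
  ∫ y, (v (x + y) + v (x - y)) ∂τ

/-- Functions of growth `κ` harmonic for the Lévy measure `σ + τ`, where `σ` is the part carried by
small jumps and `τ` the finite part, with second differences controlled uniformly. -/
structure IsLevyHarmonic (σ τ : Measure V) (κ : ℝ) (v : V → ℂ) : Prop where
  measurable : Measurable v
  growth : ∃ C, ∀ x, ‖v x‖ ≤ C * (1 + ‖x‖) ^ κ
  secondDiff_le : ∃ C, ∀ x y, ‖y‖ ≤ 1 → ‖secondDiff v y x‖ ≤ C * ‖y‖ ^ 2 * (1 + ‖x‖) ^ κ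
  eq : ∀ x, ∫ y, secondDiff v y x ∂σ + symmConv τ v x = (2 * τ.real Set.univ : ℝ) * v x

variable [BorelSpace V] [SecondCountableTopology V]
  {σ τ : Measure V} {κ : ℝ} {v : V → ℂ}

lemma norm_symm_sum_le {δ C : ℝ} (hδ : 0 ≤ δ) (hκ : 0 ≤ κ)
    (hv : ∀ x, ‖v x‖ ≤ C * (1 + δ * ‖x‖) ^ κ) (x y : V) :
    ‖v (x + y) + v (x - y)‖ ≤ C * (1 + δ * ‖x‖) ^ κ * (2 * (1 + δ * ‖y‖) ^ κ) := by
  have hC : 0 ≤ C := by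
    have := (norm_nonneg _).trans (hv 0)
    simpa using this
  calc _ ≤ _ := norm_add_le _ _
    _ ≤ C * (1 + δ * ‖x + y‖) ^ κ + C * (1 + δ * ‖x - y‖) ^ κ := add_le_add (hv _) (hv _)
    _ ≤ C * ((1 + δ * ‖x‖) ^ κ * (1 + δ * ‖y‖) ^ κ) +
        C * ((1 + δ * ‖x‖) ^ κ * (1 + δ * ‖y‖) ^ κ) := by
      gcongr
      · exact one_add_mul_norm_add_rpow_le hδ hκ x y
      · exact one_add_mul_norm_sub_rpow_le hδ hκ x y
    _ = _ := by ring

lemma integrable_symm_sum [IsFiniteMeasure τ] (hκ : 0 ≤ κ)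
    (hτ : Integrable (fun y ↦ (1 + ‖y‖) ^ κ) τ) (hm : Measurable v)
    (hv : ∃ C, ∀ x, ‖v x‖ ≤ C * (1 + ‖x‖) ^ κ) (x : V) :
    Integrable (fun y ↦ v (x + y) + v (x - y)) τ := by
  obtain ⟨C, hC⟩ := hv
  refine Integrable.mono' ((hτ.const_mul 2).const_mul (C * (1 + ‖x‖) ^ κ))
    (by fun_prop) (ae_of_all _ fun y ↦ ?_)
  simpa using norm_symm_sum_le (δ := 1) zero_le_one hκ (by simpa using hC) x y

lemma measurable_symmConv [SFinite τ] (hm : Measurable v) : Measurable (symmConv τ v) := by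
  refine StronglyMeasurable.measurable ?_
  refine StronglyMeasurable.integral_prod_right
    (f := fun x y ↦ v (x + y) + v (x - y)) ?_
  exact Measurable.stronglyMeasurable (by fun_prop)

lemma norm_symmConv_le {δ C : ℝ} (hδ : 0 ≤ δ) (hκ : 0 ≤ κ)
    (hτ : Integrable (fun y ↦ (1 + δ * ‖y‖) ^ κ) τ)
    (hv : ∀ x, ‖v x‖ ≤ C * (1 + δ * ‖x‖) ^ κ) (x : V) :
    ‖symmConv τ v x‖ ≤ C * (2 * ∫ y, (1 + δ * ‖y‖) ^ κ ∂τ) * (1 + δ * ‖x‖) ^ κ := by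
  refine (norm_integral_le_of_norm_le ((hτ.const_mul 2).const_mul _)
    (ae_of_all _ fun y ↦ norm_symm_sum_le hδ hκ hv x y)).trans_eq ?_
  rw [integral_const_mul, integral_const_mul]
  ring

lemma integrable_one_add_mul_norm_rpow {δ : ℝ} (hδ : 0 ≤ δ) (hδ1 : δ ≤ 1) (hκ : 0 ≤ κ)
    (hτ : Integrable (fun y : V ↦ (1 + ‖y‖) ^ κ) τ) :
    Integrable (fun y : V ↦ (1 + δ * ‖y‖) ^ κ) τ := by
  refine Integrable.mono' hτ (Measurable.aestronglyMeasurable (by fun_prop))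
    (ae_of_all _ fun y ↦ ?_)
  rw [Real.norm_of_nonneg (by positivity)]
  gcongr
  nlinarith [norm_nonneg y]

/-- The weights `(1 + δ‖x‖)^κ` make the growth rate of the iterated convolution as close as desired
to the total mass. -/
lemma exists_weight_integral_lt [IsFiniteMeasure τ] (hκ : 0 ≤ κ)
    (hτ : Integrable (fun y : V ↦ (1 + ‖y‖) ^ κ) τ) {M : ℝ} (hM : 2 * τ.real Set.univ < M) :
    ∃ δ : ℝ, 0 < δ ∧ δ ≤ 1 ∧ 2 * ∫ y : V, (1 + δ * ‖y‖) ^ κ ∂τ < M := by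
  have hlim : Tendsto (fun k : ℕ ↦ ∫ y : V, (1 + (1 / ((k : ℝ) + 1)) * ‖y‖) ^ κ ∂τ) atTop
      (𝓝 (∫ _ : V, (1 : ℝ) ∂τ)) := by
    refine tendsto_integral_of_dominated_convergence (fun y ↦ (1 + ‖y‖) ^ κ)
      (fun k ↦ Measurable.aestronglyMeasurable (by fun_prop)) hτ
      (fun k ↦ ae_of_all _ fun y ↦ ?_) (ae_of_all _ fun y ↦ ?_)
    · rw [Real.norm_of_nonneg (by positivity)]
      have : 1 / ((k : ℝ) + 1) ≤ 1 := by
        rw [div_le_one (by positivity)]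
        linarith [(Nat.cast_nonneg k : (0 : ℝ) ≤ k)]
      gcongr
      nlinarith [norm_nonneg y]
    · have h1 : Tendsto (fun k : ℕ ↦ 1 + (1 / ((k : ℝ) + 1)) * ‖y‖) atTop (𝓝 1) := by
        simpa using (tendsto_one_div_add_atTop_nhds_zero_nat (𝕜 := ℝ)).mul_const ‖y‖ |>.const_add 1
      simpa using h1.rpow_const (p := κ) (Or.inl one_ne_zero)
  have h2 : ∫ _ : V, (1 : ℝ) ∂τ = τ.real Set.univ := by simp
  rw [h2] at hlim
  obtain ⟨k, hk⟩ := ((hlim.const_mul 2).eventually_lt_const hM).exists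
  exact ⟨1 / ((k : ℝ) + 1), by positivity, by
    rw [div_le_one (by positivity)]
    linarith [(Nat.cast_nonneg k : (0 : ℝ) ≤ k)], hk⟩

lemma exists_norm_iterate_symmConv_le [IsFiniteMeasure τ] (hκ : 0 ≤ κ)
    (hτ : Integrable (fun y : V ↦ (1 + ‖y‖) ^ κ) τ) {M : ℝ} (hM : 2 * τ.real Set.univ < M)
    (hv : ∃ C, ∀ x, ‖v x‖ ≤ C * (1 + ‖x‖) ^ κ) :
    ∃ C, ∀ (N : ℕ) x, ‖(symmConv τ)^[N] v x‖ ≤ C * M ^ N * (1 + ‖x‖) ^ κ := by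
  obtain ⟨δ, hδ, hδ1, hlt⟩ := exists_weight_integral_lt hκ hτ hM
  obtain ⟨C, hC⟩ := hv
  have hC0 : 0 ≤ C := by simpa using (norm_nonneg _).trans (hC 0)
  have hint := integrable_one_add_mul_norm_rpow hδ.le hδ1 hκ hτ
  have hI : 0 ≤ ∫ y : V, (1 + δ * ‖y‖) ^ κ ∂τ := integral_nonneg fun y ↦ by positivity
  have key : ∀ (N : ℕ) x, ‖(symmConv τ)^[N] v x‖ ≤
      C * (1 / δ) ^ κ * M ^ N * (1 + δ * ‖x‖) ^ κ := by
    intro N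
    induction N with
    | zero =>
      intro x
      rw [Function.iterate_zero, id, pow_zero, mul_one, mul_assoc,
        ← Real.mul_rpow (by positivity) (by positivity)]
      refine (hC x).trans ?_
      gcongr
      rw [mul_add, ← mul_assoc, one_div_mul_cancel hδ.ne', mul_one, one_mul]
      gcongr
      exact (one_le_div hδ).2 hδ1
    | succ N ih =>
      intro x
      rw [Function.iterate_succ_apply']
      refine (norm_symmConv_le hδ.le hκ hint ih x).trans ?_
      rw [pow_succ, ← mul_assoc (C * (1 / δ) ^ κ)]
      refine mul_le_mul_of_nonneg_right ?_ (by positivity)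
      have hM0 : 0 ≤ M := by linarith
      exact mul_le_mul_of_nonneg_left hlt.le (by positivity)
  refine ⟨C * (1 / δ) ^ κ, fun N x ↦ (key N x).trans ?_⟩
  have : 0 ≤ M := by linarith
  gcongr
  nlinarith [norm_nonneg x]

end Basic

section Taylor

variable {V : Type*} [NormedAddCommGroup V] [NormedSpace ℝ V]

lemma norm_secondDiff_le_of_contDiff {f : V → ℂ} (hf : ContDiff ℝ 2 f) {x y : V} {M : ℝ}
    (hM : ∀ z ∈ Metric.closedBall x ‖y‖, ‖iteratedFDeriv ℝ 2 f z‖ ≤ M) :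
    ‖secondDiff f y x‖ ≤ M * ‖y‖ ^ 2 := by
  have hd : Differentiable ℝ f := hf.differentiable (by norm_num)
  have hf' : ContDiff ℝ 1 (fderiv ℝ f) := hf.fderiv_right (by norm_num)
  have hd' : Differentiable ℝ (fderiv ℝ f) := hf'.differentiable (by norm_num)
  have hnorm : ∀ z, ‖fderiv ℝ (fderiv ℝ f) z‖ = ‖iteratedFDeriv ℝ 2 f z‖ := fun z ↦ by
    rw [← norm_iteratedFDeriv_one, norm_iteratedFDeriv_fderiv]
  have hseg : ∀ w ∈ segment ℝ (x - y) x,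
      w ∈ Metric.closedBall x ‖y‖ ∧ w + y ∈ Metric.closedBall x ‖y‖ := by
    rintro w ⟨a, b, ha, hb, hab, rfl⟩
    have h1 : a • (x - y) + b • x = x - a • y := by
      rw [smul_sub, sub_add_eq_add_sub, ← add_smul, hab, one_smul]
    have h2 : x - a • y + y = x + b • y := by
      rw [← eq_sub_iff_add_eq'] at hab
      rw [hab, sub_smul, one_smul]; abel
    rw [h1, h2]
    simp only [Metric.mem_closedBall, dist_eq_norm, sub_sub_cancel_left, add_sub_cancel_left,
      norm_neg, norm_smul, Real.norm_of_nonneg ha, Real.norm_of_nonneg hb]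
    constructor <;> nlinarith [norm_nonneg y]
  have hG : ∀ w ∈ segment ℝ (x - y) x,
      HasFDerivWithinAt (fun w ↦ f (w + y) - f w) (fderiv ℝ f (w + y) - fderiv ℝ f w)
        (segment ℝ (x - y) x) w := fun w _ ↦
    (((hasFDerivAt_comp_add_right y).2 (hd (w + y)).hasFDerivAt).sub
      (hd w).hasFDerivAt).hasFDerivWithinAt
  have hbd : ∀ w ∈ segment ℝ (x - y) x, ‖fderiv ℝ f (w + y) - fderiv ℝ f w‖ ≤ M * ‖y‖ := by
    intro w hw
    have := (convex_closedBall x ‖y‖).norm_image_sub_le_of_norm_fderiv_le (𝕜 := ℝ)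
      (fun z _ ↦ hd' z) (fun z hz ↦ (hnorm z).trans_le (hM z hz)) (hseg w hw).1 (hseg w hw).2
    simpa using this
  have := (convex_segment (x - y) x).norm_image_sub_le_of_norm_hasFDerivWithin_le hG hbd
    (left_mem_segment ℝ _ _) (right_mem_segment ℝ _ _)
  rw [sub_sub_cancel] at this
  convert this using 1
  · rw [secondDiff, sub_add_cancel]
    congr 1
    ring
  · ring

lemma SchwartzMap.norm_le_one_add_norm_pow (ψ : 𝓢(V, ℂ)) (k n : ℕ) :
    ∃ C, 0 ≤ C ∧ ∀ x, ‖iteratedFDeriv ℝ n ψ x‖ ≤ C * ((1 + ‖x‖) ^ k)⁻¹ := by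
  refine ⟨2 ^ k * ((Finset.Iic (k, n)).sup fun m ↦ SchwartzMap.seminorm ℝ m.1 m.2) ψ,
    by positivity, fun x ↦ ?_⟩
  have := SchwartzMap.one_add_le_sup_seminorm_apply (𝕜 := ℝ) (m := (k, n)) le_rfl le_rfl ψ x
  rw [← div_eq_mul_inv, le_div_iff₀ (by positivity), mul_comm]
  exact this

lemma SchwartzMap.norm_secondDiff_le (ψ : 𝓢(V, ℂ)) (k : ℕ) :
    ∃ C, 0 ≤ C ∧ ∀ x y, ‖y‖ ≤ 1 → ‖secondDiff ψ y x‖ ≤ C * ‖y‖ ^ 2 * ((1 + ‖x‖) ^ k)⁻¹ := by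
  obtain ⟨C, hC0, hC⟩ := ψ.norm_le_one_add_norm_pow k 2
  refine ⟨C * 2 ^ k, by positivity, fun x y hy ↦ ?_⟩
  refine (norm_secondDiff_le_of_contDiff (M := C * (2 ^ k * ((1 + ‖x‖) ^ k)⁻¹))
    (ψ.smooth 2) fun z hz ↦ ?_).trans_eq (by ring)
  refine (hC z).trans ?_
  gcongr
  rw [← div_eq_mul_inv, le_div_iff₀ (by positivity), inv_mul_le_iff₀ (by positivity),
    ← mul_pow]
  gcongr
  rw [Metric.mem_closedBall, dist_eq_norm, norm_sub_rev] at hz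
  have := norm_le_norm_add_norm_sub' x z
  nlinarith [norm_nonneg z]

end Taylor

section Harmonic

variable {V : Type*} [NormedAddCommGroup V] [MeasurableSpace V] [BorelSpace V]
  [SecondCountableTopology V] {σ τ : Measure V} {κ : ℝ} {v : V → ℂ}

lemma secondDiff_symmConv [IsFiniteMeasure τ] (hκ : 0 ≤ κ)
    (hτ : Integrable (fun y ↦ (1 + ‖y‖) ^ κ) τ) (hm : Measurable v)
    (hv : ∃ C, ∀ x, ‖v x‖ ≤ C * (1 + ‖x‖) ^ κ) (y x : V) :
    secondDiff (symmConv τ v) y x = symmConv τ (secondDiff v y) x := by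
  have hi := integrable_symm_sum hκ hτ hm hv
  simp only [secondDiff, symmConv]
  rw [← integral_const_mul, ← integral_add (hi _) (hi _)]
  refine (integral_sub ((hi _).add (hi _)) ((hi _).const_mul 2)).symm.trans ?_
  refine integral_congr_ae (ae_of_all _ fun z ↦ ?_)
  simp only [Pi.add_apply]
  rw [add_right_comm x z y, add_sub_right_comm x z y, sub_add_eq_add_sub x z y,
    sub_right_comm x z y]
  ring

lemma measurable_secondDiff (hm : Measurable v) :
    Measurable fun p : V × V ↦ secondDiff v p.1 p.2 := by
  unfold secondDiff
  fun_prop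

lemma isLevyHarmonic_symmConv [SFinite σ] [IsFiniteMeasure τ] (hκ : 0 ≤ κ)
    (hσ : Integrable (fun y ↦ ‖y‖ ^ 2) σ) (hσ1 : ∀ᵐ y ∂σ, ‖y‖ ≤ 1)
    (hτ : Integrable (fun y ↦ (1 + ‖y‖) ^ κ) τ) (h : IsLevyHarmonic σ τ κ v) :
    IsLevyHarmonic σ τ κ (symmConv τ v) := by
  have hWm : Measurable (symmConv τ v) := measurable_symmConv h.measurable
  have hWg : ∃ C, ∀ x, ‖symmConv τ v x‖ ≤ C * (1 + ‖x‖) ^ κ := by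
    obtain ⟨C, hC⟩ := h.growth
    refine ⟨C * (2 * ∫ y, (1 + ‖y‖) ^ κ ∂τ), fun x ↦ ?_⟩
    have := norm_symmConv_le (δ := 1) (τ := τ) (κ := κ) (v := v) (C := C) zero_le_one hκ
      (by simpa using hτ) (by simpa using hC) x
    simpa using this
  have hsd := secondDiff_symmConv hκ hτ h.measurable h.growth
  obtain ⟨C, hC⟩ := h.secondDiff_le
  refine ⟨hWm, hWg, ?_, fun x ↦ ?_⟩
  · refine ⟨C * (2 * ∫ y, (1 + ‖y‖) ^ κ ∂τ), fun x y hy ↦ ?_⟩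
    rw [hsd]
    have := norm_symmConv_le (δ := 1) (τ := τ) (κ := κ) (v := secondDiff v y) (C := C * ‖y‖ ^ 2)
      zero_le_one hκ (by simpa using hτ) (fun x ↦ by simpa using hC x y hy) x
    simp only [one_mul] at this
    exact this.trans_eq (by ring)
  · have hm1 := measurable_secondDiff h.measurable
    have hint : Integrable (fun p : V × V ↦ secondDiff v p.1 (x + p.2) + secondDiff v p.1 (x - p.2))
        (σ.prod τ) := by
      refine Integrable.mono' ((hσ.mul_prod hτ).const_mul (C * (1 + ‖x‖) ^ κ * 2))
        (Measurable.aestronglyMeasurable ?_) ?_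
      · exact (hm1.comp (by fun_prop : Measurable fun p : V × V ↦ (p.1, x + p.2))).add
          (hm1.comp (by fun_prop : Measurable fun p : V × V ↦ (p.1, x - p.2)))
      · filter_upwards [Measure.quasiMeasurePreserving_fst.ae hσ1] with p hp
        have := norm_symm_sum_le (δ := 1) (κ := κ) (v := secondDiff v p.1) (C := C * ‖p.1‖ ^ 2)
          zero_le_one hκ (fun x ↦ by simpa using hC x p.1 hp) x p.2
        simp only [one_mul] at this
        exact this.trans_eq (by ring)
    simp_rw [hsd]
    have hi := integrable_symm_sum hκ hτ h.measurable h.growth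
    have hiW := integrable_symm_sum hκ hτ hWm hWg
    have hsdi : ∀ x, Integrable (fun y ↦ secondDiff v y x) σ := fun x ↦ by
      refine Integrable.mono' ((hσ.const_mul C).mul_const ((1 + ‖x‖) ^ κ))
        (Measurable.aestronglyMeasurable
          (hm1.comp (by fun_prop : Measurable fun y : V ↦ (y, x)))) ?_
      filter_upwards [hσ1] with y hy using hC x y hy
    have hswap : ∫ y, symmConv τ (secondDiff v y) x ∂σ =
        ∫ z, ((2 * τ.real Set.univ : ℝ) * (v (x + z) + v (x - z)) -
          (symmConv τ v (x + z) + symmConv τ v (x - z))) ∂τ := by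
      unfold symmConv at *
      rw [integral_integral_swap hint]
      refine integral_congr_ae (ae_of_all _ fun z ↦ ?_)
      simp only
      rw [integral_add (hsdi _) (hsdi _), eq_sub_of_add_eq (h.eq (x + z)),
        eq_sub_of_add_eq (h.eq (x - z))]
      unfold symmConv
      ring
    rw [hswap, integral_sub ((hi x).const_mul _) (hiW x), integral_const_mul]
    unfold symmConv
    ring

end Harmonic

section Mollify

variable {V : Type*} [NormedAddCommGroup V] [InnerProductSpace ℝ V] [FiniteDimensional ℝ V]
  [MeasurableSpace V] [BorelSpace V] {σ τ : Measure V} {κ : ℝ} {v : V → ℂ}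

variable (V) in
lemma exists_integrable_rpow_mul_inv_pow (κ : ℝ) :
    ∃ k : ℕ, Integrable (fun z : V ↦ (1 + ‖z‖) ^ κ * ((1 + ‖z‖) ^ k)⁻¹) := by
  obtain ⟨k, hk⟩ := exists_nat_gt (Module.finrank ℝ V + κ)
  refine ⟨k, (integrable_one_add_norm (μ := volume) (E := V) (r := k - κ) (by linarith)).congr
    (ae_of_all _ fun z ↦ ?_)⟩
  have : 0 < 1 + ‖z‖ := by positivity
  simp only
  rw [neg_sub, Real.rpow_sub this, Real.rpow_natCast, div_eq_mul_inv]

lemma SchwartzMap.integrable_rpow_mul_norm (ψ : 𝓢(V, ℂ)) (κ : ℝ) :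
    Integrable (fun z ↦ (1 + ‖z‖) ^ κ * ‖ψ z‖) := by
  obtain ⟨k, hk⟩ := exists_integrable_rpow_mul_inv_pow V κ
  obtain ⟨C, hC0, hC⟩ := ψ.norm_le_one_add_norm_pow k 0
  refine Integrable.mono' (hk.const_mul C) (Measurable.aestronglyMeasurable ?_)
    (ae_of_all _ fun z ↦ ?_)
  · have := ψ.continuous.measurable
    fun_prop
  · rw [Real.norm_of_nonneg (by positivity), mul_left_comm]
    have := hC z
    rw [norm_iteratedFDeriv_zero] at this
    gcongr

lemma integrable_comp_sub_mul_schwartz (hκ : 0 ≤ κ) (hm : Measurable v)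
    (hv : ∃ C, ∀ x, ‖v x‖ ≤ C * (1 + ‖x‖) ^ κ) (ψ : 𝓢(V, ℂ)) (x : V) :
    Integrable (fun z ↦ v (x - z) * ψ z) := by
  obtain ⟨C, hC⟩ := hv
  have hC0 : 0 ≤ C := by simpa using (norm_nonneg _).trans (hC 0)
  have hψ := ψ.continuous.measurable
  refine Integrable.mono' ((ψ.integrable_rpow_mul_norm κ).const_mul (C * (1 + ‖x‖) ^ κ))
    (Measurable.aestronglyMeasurable (by fun_prop)) (ae_of_all _ fun z ↦ ?_)
  rw [norm_mul, ← mul_assoc]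
  gcongr
  refine (hC _).trans ?_
  rw [mul_assoc]
  gcongr
  exact one_add_norm_sub_rpow_le hκ x z

lemma secondDiff_convolution (hκ : 0 ≤ κ) (hm : Measurable v)
    (hv : ∃ C, ∀ x, ‖v x‖ ≤ C * (1 + ‖x‖) ^ κ) (ψ : 𝓢(V, ℂ)) (y x : V) :
    secondDiff (fun x ↦ ∫ z, v (x - z) * ψ z) y x = ∫ z, secondDiff v y (x - z) * ψ z := by
  have hi := integrable_comp_sub_mul_schwartz hκ hm hv ψ
  simp only [secondDiff]
  rw [← integral_const_mul, ← integral_add (hi _) (hi _)]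
  refine (integral_sub ((hi _).add (hi _)) ((hi _).const_mul 2)).symm.trans ?_
  refine integral_congr_ae (ae_of_all _ fun z ↦ ?_)
  simp only [Pi.add_apply]
  rw [add_sub_right_comm x y z, sub_right_comm x y z]
  ring

lemma secondDiff_convolution' (hκ : 0 ≤ κ) (hm : Measurable v)
    (hv : ∃ C, ∀ x, ‖v x‖ ≤ C * (1 + ‖x‖) ^ κ) (ψ : 𝓢(V, ℂ)) (y x : V) :
    secondDiff (fun x ↦ ∫ z, v (x - z) * ψ z) y x = ∫ z, v (x - z) * secondDiff ψ y z := by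
  have hi := integrable_comp_sub_mul_schwartz hκ hm hv ψ
  have h1 : ∀ a, ∫ z, v (x + a - z) * ψ z = ∫ z, v (x - z) * ψ (z + a) := fun a ↦ by
    rw [← integral_add_right_eq_self (fun z ↦ v (x + a - z) * ψ z) a]
    simp only [add_sub_add_right_eq_sub]
  have hi1 : ∀ a, Integrable (fun z ↦ v (x - z) * ψ (z + a)) := fun a ↦ by
    have := (hi (x + a)).comp_add_right a
    simpa only [add_sub_add_right_eq_sub] using this
  simp only [secondDiff]
  rw [sub_eq_add_neg x y, h1, h1, ← integral_const_mul, ← integral_add (hi1 _) (hi1 _)]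
  refine (integral_sub ((hi1 _).add (hi1 _)) ((hi _).const_mul 2)).symm.trans ?_
  refine integral_congr_ae (ae_of_all _ fun z ↦ ?_)
  simp only [Pi.add_apply, ← sub_eq_add_neg]
  ring

lemma symmConv_convolution [IsFiniteMeasure τ] (hκ : 0 ≤ κ)
    (hτ : Integrable (fun y ↦ (1 + ‖y‖) ^ κ) τ) (hm : Measurable v)
    (hv : ∃ C, ∀ x, ‖v x‖ ≤ C * (1 + ‖x‖) ^ κ) (ψ : 𝓢(V, ℂ)) (x : V) :
    symmConv τ (fun x ↦ ∫ z, v (x - z) * ψ z) x = ∫ z, symmConv τ v (x - z) * ψ z := by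
  have hi := integrable_comp_sub_mul_schwartz hκ hm hv ψ
  have hψ := ψ.continuous.measurable
  obtain ⟨C, hC⟩ := hv
  have hC0 : 0 ≤ C := by simpa using (norm_nonneg _).trans (hC 0)
  have hint : Integrable
      (fun p : V × V ↦ (v (x - p.2 + p.1) + v (x - p.2 - p.1)) * ψ p.2) (τ.prod volume) := by
    refine Integrable.mono' ((hτ.mul_prod (ψ.integrable_rpow_mul_norm κ)).const_mul
      (C * (1 + ‖x‖) ^ κ * 2)) (Measurable.aestronglyMeasurable (by fun_prop))
      (ae_of_all _ fun p ↦ ?_)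
    rw [norm_mul]
    calc _ ≤ (C * (1 + ‖x - p.2‖) ^ κ * (2 * (1 + ‖p.1‖) ^ κ)) * ‖ψ p.2‖ := by
          gcongr
          simpa using norm_symm_sum_le (δ := 1) zero_le_one hκ (by simpa using hC) (x - p.2) p.1
      _ ≤ (C * ((1 + ‖x‖) ^ κ * (1 + ‖p.2‖) ^ κ) * (2 * (1 + ‖p.1‖) ^ κ)) * ‖ψ p.2‖ := by
          gcongr
          exact one_add_norm_sub_rpow_le hκ x p.2
      _ = _ := by ring
  unfold symmConv
  simp_rw [← integral_mul_const]
  rw [← integral_integral_swap hint]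
  refine integral_congr_ae (ae_of_all _ fun y ↦ ?_)
  simp only
  rw [← integral_add (hi _) (hi _)]
  refine integral_congr_ae (ae_of_all _ fun z ↦ ?_)
  simp only
  rw [add_sub_right_comm, sub_right_comm]
  ring

lemma isLevyHarmonic_convolution [SFinite σ] [IsFiniteMeasure τ] (hκ : 0 ≤ κ)
    (hσ : Integrable (fun y ↦ ‖y‖ ^ 2) σ) (hσ1 : ∀ᵐ y ∂σ, ‖y‖ ≤ 1)
    (hτ : Integrable (fun y ↦ (1 + ‖y‖) ^ κ) τ) (hv : ContDiff ℝ 2 v)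
    (hg : ∃ C, ∀ x, ‖v x‖ ≤ C * (1 + ‖x‖) ^ κ)
    (heq : ∀ x, ∫ y, secondDiff v y x ∂σ + symmConv τ v x = (2 * τ.real Set.univ : ℝ) * v x)
    (ψ : 𝓢(V, ℂ)) (hψ : HasCompactSupport ψ) :
    IsLevyHarmonic σ τ κ (fun x ↦ ∫ z, v (x - z) * ψ z) := by
  have hm := hv.continuous.measurable
  have hm2 := measurable_secondDiff hm
  have hi := integrable_comp_sub_mul_schwartz hκ hm hg ψ
  have hψm := ψ.continuous.measurable
  have hsd := secondDiff_convolution' hκ hm hg ψ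
  refine ⟨?_, ?_, ?_, fun x ↦ ?_⟩
  · refine StronglyMeasurable.measurable (StronglyMeasurable.integral_prod_right
      (f := fun x z ↦ v (x - z) * ψ z) (Measurable.stronglyMeasurable (by fun_prop)))
  · obtain ⟨C, hC⟩ := hg
    have hC0 : 0 ≤ C := by simpa using (norm_nonneg _).trans (hC 0)
    refine ⟨C * ∫ z, (1 + ‖z‖) ^ κ * ‖ψ z‖, fun x ↦ ?_⟩
    refine (norm_integral_le_of_norm_le
      ((ψ.integrable_rpow_mul_norm κ).const_mul (C * (1 + ‖x‖) ^ κ))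
      (ae_of_all _ fun z ↦ ?_)).trans_eq (by rw [integral_const_mul]; ring)
    rw [norm_mul, ← mul_assoc]
    gcongr
    refine (hC _).trans ?_
    rw [mul_assoc]
    gcongr
    exact one_add_norm_sub_rpow_le hκ x z
  · obtain ⟨C, hC⟩ := hg
    have hC0 : 0 ≤ C := by simpa using (norm_nonneg _).trans (hC 0)
    obtain ⟨k, hk⟩ := exists_integrable_rpow_mul_inv_pow V κ
    obtain ⟨B, hB0, hB⟩ := ψ.norm_secondDiff_le k
    refine ⟨C * B * ∫ z : V, (1 + ‖z‖) ^ κ * ((1 + ‖z‖) ^ k)⁻¹, fun x y hy ↦ ?_⟩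
    rw [hsd]
    refine (norm_integral_le_of_norm_le (hk.const_mul (C * (1 + ‖x‖) ^ κ * (B * ‖y‖ ^ 2)))
      (ae_of_all _ fun z ↦ ?_)).trans_eq (by rw [integral_const_mul]; ring)
    rw [norm_mul]
    calc _ ≤ (C * ((1 + ‖x‖) ^ κ * (1 + ‖z‖) ^ κ)) * (B * ‖y‖ ^ 2 * ((1 + ‖z‖) ^ k)⁻¹) := by
          gcongr
          · refine (hC _).trans ?_
            gcongr
            exact one_add_norm_sub_rpow_le hκ x z
          · exact hB z y hy
      _ = _ := by ring
  · obtain ⟨R, hR⟩ := hψ.isCompact.isBounded.subset_closedBall (0 : V)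
    obtain ⟨M, hM⟩ := (isCompact_closedBall x (R + 1)).exists_bound_of_continuousOn
      (hv.continuous_iteratedFDeriv (m := 2) le_rfl).continuousOn
    have hbd : ∀ y z, ‖y‖ ≤ 1 → ‖secondDiff v y (x - z) * ψ z‖ ≤ M * ‖y‖ ^ 2 * ‖ψ z‖ := by
      intro y z hy
      rw [norm_mul]
      by_cases hz : ψ z = 0
      · simp [hz]
      gcongr
      refine norm_secondDiff_le_of_contDiff hv fun w hw ↦ hM w ?_
      have hzR : ‖z‖ ≤ R := by simpa using hR (subset_tsupport _ hz)
      rw [Metric.mem_closedBall, dist_eq_norm] at hw ⊢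
      calc ‖w - x‖ = ‖(w - (x - z)) - z‖ := by congr 1; abel
        _ ≤ _ := norm_sub_le _ _
        _ ≤ _ := by linarith
    have hint : Integrable (fun p : V × V ↦ secondDiff v p.1 (x - p.2) * ψ p.2)
        (σ.prod volume) := by
      refine Integrable.mono' ((hσ.mul_prod ψ.integrable.norm).const_mul M)
        (Measurable.aestronglyMeasurable ?_) ?_
      · exact (hm2.comp (by fun_prop : Measurable fun p : V × V ↦ (p.1, x - p.2))).mul
          (hψm.comp measurable_snd)
      · filter_upwards [Measure.quasiMeasurePreserving_fst.ae hσ1] with p hp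
        rw [← mul_assoc]
        exact hbd p.1 p.2 hp
    have hsdi := hint.integral_prod_right
    simp_rw [secondDiff_convolution hκ hm hg ψ]
    rw [integral_integral_swap hint, symmConv_convolution hκ hτ hm hg, ← integral_const_mul]
    have hWg : ∃ C, ∀ x, ‖symmConv τ v x‖ ≤ C * (1 + ‖x‖) ^ κ := by
      obtain ⟨C, hC⟩ := hg
      refine ⟨C * (2 * ∫ y, (1 + ‖y‖) ^ κ ∂τ), fun x ↦ ?_⟩
      have := norm_symmConv_le (δ := 1) (τ := τ) (κ := κ) (v := v) (C := C) zero_le_one hκ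
        (by simpa using hτ) (by simpa using hC) x
      simpa using this
    rw [← integral_add hsdi
      (integrable_comp_sub_mul_schwartz hκ (measurable_symmConv hm) hWg ψ x)]
    refine integral_congr_ae (ae_of_all _ fun z ↦ ?_)
    simp only
    rw [integral_mul_const, ← add_mul, heq, mul_assoc]

lemma continuous_convolution_schwartz (hm : Continuous v) (ψ : 𝓢(V, ℂ))
    (hψ : HasCompactSupport ψ) : Continuous fun x ↦ ∫ z, v (x - z) * ψ z := by
  have := hψ.continuous_convolution_left (ContinuousLinearMap.mul ℝ ℂ) ψ.continuous
    (hm.locallyIntegrable (μ := volume))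
  refine this.congr fun x ↦ integral_congr_ae (ae_of_all _ fun z ↦ ?_)
  simp [mul_comm]

end Mollify

section Symbol

variable {V : Type*} [NormedAddCommGroup V] [InnerProductSpace ℝ V] [FiniteDimensional ℝ V]
  [MeasurableSpace V] [BorelSpace V] {σ τ : Measure V} {κ : ℝ} {v : V → ℂ}

/-- The Fourier symbol of `v ↦ -∫ secondDiff v y · ∂σ`. -/
noncomputable def levySymbol (σ : Measure V) (ξ : V) : ℝ :=
  ∫ y, (2 - 2 * Real.cos (2 * Real.pi * ⟪y, ξ⟫)) ∂σ

lemma two_sub_two_mul_cos_le (y ξ : V) :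
    2 - 2 * Real.cos (2 * Real.pi * ⟪y, ξ⟫) ≤ (2 * Real.pi) ^ 2 * ‖ξ‖ ^ 2 * ‖y‖ ^ 2 := by
  have h1 := Real.one_sub_sq_div_two_le_cos (x := 2 * Real.pi * ⟪y, ξ⟫)
  have h2 : ⟪y, ξ⟫ ^ 2 ≤ (‖y‖ * ‖ξ‖) ^ 2 := sq_le_sq' (by
    linarith [neg_abs_le ⟪y, ξ⟫, abs_real_inner_le_norm y ξ]) (real_inner_le_norm y ξ)
  calc _ ≤ (2 * Real.pi) ^ 2 * ⟪y, ξ⟫ ^ 2 := by linarith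
    _ ≤ (2 * Real.pi) ^ 2 * (‖y‖ * ‖ξ‖) ^ 2 := by gcongr
    _ = _ := by ring

lemma two_sub_two_mul_cos_nonneg (t : ℝ) : 0 ≤ 2 - 2 * Real.cos t := by
  linarith [Real.cos_le_one t]

lemma levySymbol_nonneg (ξ : V) : 0 ≤ levySymbol σ ξ :=
  integral_nonneg fun _ ↦ two_sub_two_mul_cos_nonneg _

lemma integrable_two_sub_two_mul_cos (hσ : Integrable (fun y ↦ ‖y‖ ^ 2) σ) (ξ : V) :
    Integrable (fun y ↦ 2 - 2 * Real.cos (2 * Real.pi * ⟪y, ξ⟫)) σ := by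
  refine Integrable.mono' (hσ.const_mul ((2 * Real.pi) ^ 2 * ‖ξ‖ ^ 2))
    (Continuous.aestronglyMeasurable (by fun_prop)) (ae_of_all _ fun y ↦ ?_)
  rw [Real.norm_of_nonneg (two_sub_two_mul_cos_nonneg _)]
  exact two_sub_two_mul_cos_le y ξ

lemma hasFDerivAt_levySymbol (hσ : Integrable (fun y ↦ ‖y‖ ^ 2) σ) (ξ : V) :
    HasFDerivAt (levySymbol σ)
      (∫ y, (4 * Real.pi * Real.sin (2 * Real.pi * ⟪y, ξ⟫)) • innerSL ℝ y ∂σ) ξ := by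
  refine hasFDerivAt_integral_of_dominated_of_fderiv_le (𝕜 := ℝ)
    (F := fun ξ y ↦ 2 - 2 * Real.cos (2 * Real.pi * ⟪y, ξ⟫))
    (F' := fun ξ y ↦ (4 * Real.pi * Real.sin (2 * Real.pi * ⟪y, ξ⟫)) • innerSL ℝ y)
    (bound := fun y ↦ 8 * Real.pi ^ 2 * (‖ξ‖ + 1) * ‖y‖ ^ 2)
    (Metric.ball_mem_nhds ξ one_pos)
    (Eventually.of_forall fun ξ ↦ (integrable_two_sub_two_mul_cos hσ ξ).aestronglyMeasurable)
    (integrable_two_sub_two_mul_cos hσ ξ)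
    (Continuous.aestronglyMeasurable (by fun_prop)) (ae_of_all _ fun y ζ hζ ↦ ?_)
    (hσ.const_mul _) (ae_of_all _ fun y ζ _ ↦ ?_)
  · have hζ' : ‖ζ‖ ≤ ‖ξ‖ + 1 := by
      have := norm_le_norm_add_norm_sub' ζ ξ
      rw [Metric.mem_ball, dist_eq_norm] at hζ
      linarith
    have hs : |Real.sin (2 * Real.pi * ⟪y, ζ⟫)| ≤ 2 * Real.pi * (‖y‖ * (‖ξ‖ + 1)) := by
      refine Real.abs_sin_le_abs.trans ?_
      rw [abs_mul, abs_of_nonneg Real.two_pi_pos.le]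
      gcongr
      exact (abs_real_inner_le_norm y ζ).trans (by gcongr)
    rw [norm_smul, innerSL_apply_norm, norm_mul,
      Real.norm_of_nonneg (by positivity : 0 ≤ 4 * Real.pi)]
    calc _ ≤ 4 * Real.pi * (2 * Real.pi * (‖y‖ * (‖ξ‖ + 1))) * ‖y‖ := by gcongr; exact hs
      _ = _ := by ring
  · have h1 : HasFDerivAt (fun ξ ↦ 2 * Real.pi * ⟪y, ξ⟫) ((2 * Real.pi) • innerSL ℝ y) ζ :=
      ((innerSL ℝ y).hasFDerivAt).const_mul _
    refine ((h1.cos.const_mul 2).const_sub 2).congr_fderiv ?_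
    ext h
    simp
    ring

lemma integrable_sin_smul (hσ : Integrable (fun y ↦ ‖y‖ ^ 2) σ) (ξ : V) :
    Integrable (fun y ↦ (4 * Real.pi * Real.sin (2 * Real.pi * ⟪y, ξ⟫)) • innerSL ℝ y) σ := by
  refine Integrable.mono' (hσ.const_mul (8 * Real.pi ^ 2 * ‖ξ‖))
    (Continuous.aestronglyMeasurable (by fun_prop)) (ae_of_all _ fun y ↦ ?_)
  have hs : |Real.sin (2 * Real.pi * ⟪y, ξ⟫)| ≤ 2 * Real.pi * (‖y‖ * ‖ξ‖) := by
    refine Real.abs_sin_le_abs.trans ?_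
    rw [abs_mul, abs_of_nonneg Real.two_pi_pos.le]
    gcongr
    exact abs_real_inner_le_norm y ξ
  rw [norm_smul, innerSL_apply_norm, norm_mul,
    Real.norm_of_nonneg (by positivity : 0 ≤ 4 * Real.pi)]
  calc _ ≤ 4 * Real.pi * (2 * Real.pi * (‖y‖ * ‖ξ‖)) * ‖y‖ := by gcongr; exact hs
    _ = _ := by ring

lemma fderiv_levySymbol_apply (hσ : Integrable (fun y ↦ ‖y‖ ^ 2) σ) (ξ h : V) :
    fderiv ℝ (levySymbol σ) ξ h =
      ∫ y, 4 * Real.pi * Real.sin (2 * Real.pi * ⟪y, ξ⟫) * ⟪y, h⟫ ∂σ := by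
  rw [(hasFDerivAt_levySymbol hσ ξ).fderiv,
    ContinuousLinearMap.integral_apply (integrable_sin_smul hσ ξ)]
  simp

lemma norm_inner_mul_inner_le (y h k : V) : ‖⟪y, h⟫ * ⟪y, k⟫‖ ≤ ‖h‖ * ‖k‖ * ‖y‖ ^ 2 := by
  rw [norm_mul]
  calc _ ≤ (‖y‖ * ‖h‖) * (‖y‖ * ‖k‖) := by
        gcongr
        · exact norm_inner_le_norm y h
        · exact norm_inner_le_norm y k
    _ = _ := by ring

lemma hasFDerivAt_fderiv_levySymbol_apply (hσ : Integrable (fun y ↦ ‖y‖ ^ 2) σ) (ξ h : V) :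
    HasFDerivAt (fun ξ ↦ fderiv ℝ (levySymbol σ) ξ h)
      (∫ y, (8 * Real.pi ^ 2 * Real.cos (2 * Real.pi * ⟪y, ξ⟫) * ⟪y, h⟫) • innerSL ℝ y ∂σ) ξ := by
  simp_rw [fderiv_levySymbol_apply hσ]
  refine hasFDerivAt_integral_of_dominated_of_fderiv_le (𝕜 := ℝ)
    (F := fun ξ y ↦ 4 * Real.pi * Real.sin (2 * Real.pi * ⟪y, ξ⟫) * ⟪y, h⟫)
    (F' := fun ξ y ↦ (8 * Real.pi ^ 2 * Real.cos (2 * Real.pi * ⟪y, ξ⟫) * ⟪y, h⟫) • innerSL ℝ y)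
    (bound := fun y ↦ 8 * Real.pi ^ 2 * ‖h‖ * ‖y‖ ^ 2)
    (Metric.ball_mem_nhds ξ one_pos)
    (Eventually.of_forall fun ξ ↦ Continuous.aestronglyMeasurable (by fun_prop)) ?_
    (Continuous.aestronglyMeasurable (by fun_prop)) (ae_of_all _ fun y ζ _ ↦ ?_)
    (hσ.const_mul _) (ae_of_all _ fun y ζ _ ↦ ?_)
  · have := (ContinuousLinearMap.apply ℝ ℝ h).integrable_comp (integrable_sin_smul hσ ξ)
    simpa using this
  · rw [norm_smul, innerSL_apply_norm, norm_mul, norm_mul,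
      Real.norm_of_nonneg (by positivity : 0 ≤ 8 * Real.pi ^ 2)]
    calc _ ≤ 8 * Real.pi ^ 2 * 1 * (‖y‖ * ‖h‖) * ‖y‖ := by
          gcongr
          · exact Real.abs_cos_le_one _
          · exact norm_inner_le_norm y h
      _ = _ := by ring
  · have h1 : HasFDerivAt (fun ξ ↦ 2 * Real.pi * ⟪y, ξ⟫) ((2 * Real.pi) • innerSL ℝ y) ζ :=
      ((innerSL ℝ y).hasFDerivAt).const_mul _
    refine ((h1.sin.const_mul (4 * Real.pi)).mul_const ⟪y, h⟫).congr_fderiv ?_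
    ext k
    simp
    ring

lemma contDiff_integral_cos_mul {f : V → ℝ}
    (hf : ∀ n : ℕ, Integrable (fun y ↦ ‖y‖ ^ n * ‖f y‖) σ) (hfi : Integrable f σ) :
    ContDiff ℝ ∞ fun ξ ↦ ∫ y, Real.cos (2 * Real.pi * ⟪y, ξ⟫) * f y ∂σ := by
  have hF := VectorFourier.contDiff_fourierIntegral (N := ⊤) (μ := σ) (innerSL ℝ (E := V))
    (f := fun y ↦ (f y : ℂ)) fun n _ ↦ by simpa using hf n
  convert Complex.reCLM.contDiff.comp hF using 2 with ξ
  rw [Function.comp_apply, VectorFourier.fourierIntegral]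
  have hint : Integrable (fun y ↦ 𝐞 (-⟪y, ξ⟫) • (f y : ℂ)) σ := by
    refine Integrable.mono' hfi.norm ?_ (ae_of_all _ fun y ↦ by simp)
    refine AEStronglyMeasurable.smul (Continuous.aestronglyMeasurable (by fun_prop)) ?_
    exact Complex.continuous_ofReal.comp_aestronglyMeasurable hfi.aestronglyMeasurable
  refine Eq.trans ?_ (Complex.reCLM.integral_comp_comm hint)
  refine integral_congr_ae (ae_of_all _ fun y ↦ ?_)
  simp [Circle.smul_def, Real.fourierChar_apply, Complex.exp_re]
  exact Or.inl rfl

lemma contDiff_levySymbol (hσ : Integrable (fun y ↦ ‖y‖ ^ 2) σ) (hσ1 : ∀ᵐ y ∂σ, ‖y‖ ≤ 1) :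
    ContDiff ℝ ∞ (levySymbol σ) := by
  rw [contDiff_infty_iff_fderiv]
  refine ⟨fun ξ ↦ (hasFDerivAt_levySymbol hσ ξ).differentiableAt,
    contDiff_clm_apply_iff.2 fun h ↦ ?_⟩
  rw [contDiff_infty_iff_fderiv]
  refine ⟨fun ξ ↦ (hasFDerivAt_fderiv_levySymbol_apply hσ ξ h).differentiableAt,
    contDiff_clm_apply_iff.2 fun k ↦ ?_⟩
  have hb : ∀ n : ℕ, Integrable
      (fun y ↦ ‖y‖ ^ n * ‖8 * Real.pi ^ 2 * (⟪y, h⟫ * ⟪y, k⟫)‖) σ := fun n ↦ by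
    refine Integrable.mono' (hσ.const_mul (8 * Real.pi ^ 2 * (‖h‖ * ‖k‖)))
      (Continuous.aestronglyMeasurable (by fun_prop)) ?_
    filter_upwards [hσ1] with y hy
    rw [norm_mul, norm_norm, norm_pow, norm_norm, norm_mul,
      Real.norm_of_nonneg (by positivity : 0 ≤ 8 * Real.pi ^ 2)]
    calc _ ≤ 1 * (8 * Real.pi ^ 2 * (‖h‖ * ‖k‖ * ‖y‖ ^ 2)) := by
          gcongr
          · exact pow_le_one₀ (norm_nonneg y) hy
          · exact norm_inner_mul_inner_le y h k
      _ = _ := by ring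
  have hi : Integrable (fun y ↦ 8 * Real.pi ^ 2 * (⟪y, h⟫ * ⟪y, k⟫)) σ := by
    rw [← integrable_norm_iff (Continuous.aestronglyMeasurable (by fun_prop))]
    simpa using hb 0
  convert contDiff_integral_cos_mul hb hi using 2 with ξ
  rw [(hasFDerivAt_fderiv_levySymbol_apply hσ ξ h).fderiv, ContinuousLinearMap.integral_apply]
  · refine integral_congr_ae (ae_of_all _ fun y ↦ ?_)
    simp
    ring
  · refine Integrable.mono' (hσ.const_mul (8 * Real.pi ^ 2 * ‖h‖))
      (Continuous.aestronglyMeasurable (by fun_prop)) (ae_of_all _ fun y ↦ ?_)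
    rw [norm_smul, innerSL_apply_norm, norm_mul, norm_mul,
      Real.norm_of_nonneg (by positivity : 0 ≤ 8 * Real.pi ^ 2)]
    calc _ ≤ 8 * Real.pi ^ 2 * 1 * (‖y‖ * ‖h‖) * ‖y‖ := by
          gcongr
          · exact Real.abs_cos_le_one _
          · exact norm_inner_le_norm y h
      _ = _ := by ring

lemma secondDiff_fourierInv (f : 𝓢(V, ℂ)) (y x : V) :
    secondDiff (𝓕⁻ (f : V → ℂ)) y x =
      -∫ ξ, ((2 - 2 * Real.cos (2 * Real.pi * ⟪y, ξ⟫) : ℝ) : ℂ) * (𝐞 ⟪ξ, x⟫ • f ξ) := by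
  have hi : ∀ x, Integrable (fun ξ ↦ 𝐞 ⟪ξ, x⟫ • f ξ) := fun x ↦ by
    refine Integrable.mono' f.integrable.norm (Continuous.aestronglyMeasurable ?_)
      (ae_of_all _ fun y ↦ by simp)
    have := f.continuous
    fun_prop
  simp only [secondDiff, Real.fourierInv_eq]
  rw [← integral_const_mul, ← integral_add (hi _) (hi _)]
  refine (integral_sub ((hi _).add (hi _)) ((hi _).const_mul 2)).symm.trans ?_
  rw [← integral_neg]
  refine integral_congr_ae (ae_of_all _ fun ξ ↦ ?_)
  simp only [Pi.add_apply, inner_add_right, inner_neg_right, Circle.smul_def, smul_eq_mul,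
    sub_eq_add_neg, AddChar.map_add_eq_mul, Circle.coe_mul]
  have : (𝐞 ⟪ξ, y⟫ : ℂ) + 𝐞 (-⟪ξ, y⟫) = 2 * Complex.cos (2 * Real.pi * ⟪y, ξ⟫) := by
    rw [Real.fourierChar_apply, Real.fourierChar_apply, Complex.two_cos, real_inner_comm]
    push_cast
    ring_nf
  push_cast
  linear_combination (𝐞 ⟪ξ, x⟫ : ℂ) * f ξ * this

lemma fourierInv_levySymbol_mul [SFinite σ] (hσ : Integrable (fun y ↦ ‖y‖ ^ 2) σ)
    (f : 𝓢(V, ℂ)) (x : V) :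
    𝓕⁻ (fun ξ ↦ (levySymbol σ ξ : ℂ) * f ξ) x = -∫ y, secondDiff (𝓕⁻ (f : V → ℂ)) y x ∂σ := by
  have hf : Continuous f := f.continuous
  have hint : Integrable (fun p : V × V ↦ ((2 - 2 * Real.cos (2 * Real.pi * ⟪p.1, p.2⟫) : ℝ) : ℂ) *
      (𝐞 ⟪p.2, x⟫ • f p.2)) (σ.prod volume) := by
    refine Integrable.mono' ((hσ.mul_prod (f.integrable_pow_mul volume 2)).const_mul
      ((2 * Real.pi) ^ 2)) (Continuous.aestronglyMeasurable (by fun_prop)) (ae_of_all _ fun p ↦ ?_)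
    rw [norm_mul, Circle.norm_smul, Complex.norm_real,
      Real.norm_of_nonneg (two_sub_two_mul_cos_nonneg _)]
    calc _ ≤ ((2 * Real.pi) ^ 2 * ‖p.2‖ ^ 2 * ‖p.1‖ ^ 2) * ‖f p.2‖ := by
          gcongr
          exact two_sub_two_mul_cos_le p.1 p.2
      _ = _ := by ring
  simp_rw [secondDiff_fourierInv, integral_neg, neg_neg]
  rw [integral_integral_swap hint, Real.fourierInv_eq]
  refine integral_congr_ae (ae_of_all _ fun ξ ↦ ?_)
  simp only
  rw [integral_mul_const, integral_complex_ofReal, ← levySymbol, mul_smul_comm]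

end Symbol

section Duality

variable {V : Type*} [NormedAddCommGroup V] [InnerProductSpace ℝ V] [FiniteDimensional ℝ V]
  [MeasurableSpace V] [BorelSpace V] {σ τ : Measure V} {κ : ℝ} {v : V → ℂ}

/-- Moving the operator from `v` to the test function. -/
lemma IsLevyHarmonic.integral_mul_eq [SFinite σ] [IsFiniteMeasure τ] (hκ : 0 ≤ κ)
    (hσ : Integrable (fun y ↦ ‖y‖ ^ 2) σ) (hσ1 : ∀ᵐ y ∂σ, ‖y‖ ≤ 1)
    (h : IsLevyHarmonic σ τ κ v) {φ ψ : 𝓢(V, ℂ)}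
    (hφ : ∀ z, φ z = (2 * τ.real Set.univ : ℝ) * ψ z - ∫ y, secondDiff ψ y z ∂σ) (x : V) :
    ∫ z, v (x - z) * φ z = ∫ z, symmConv τ v (x - z) * ψ z := by
  have hm := h.measurable
  have hm2 := measurable_secondDiff hm
  have hψm := ψ.continuous.measurable
  have hψ2 := measurable_secondDiff hψm
  have hi := integrable_comp_sub_mul_schwartz hκ hm h.growth
  obtain ⟨C, hC⟩ := h.growth
  obtain ⟨D, hD⟩ := h.secondDiff_le
  have hC0 : 0 ≤ C := by simpa using (norm_nonneg _).trans (hC 0)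
  obtain ⟨k, hk⟩ := exists_integrable_rpow_mul_inv_pow V κ
  obtain ⟨B, hB0, hB⟩ := ψ.norm_secondDiff_le k
  have hint1 : Integrable (fun p : V × V ↦ v (x - p.2) * secondDiff ψ p.1 p.2) (σ.prod volume) := by
    refine Integrable.mono' ((hσ.mul_prod hk).const_mul (C * (1 + ‖x‖) ^ κ * B))
      (Measurable.aestronglyMeasurable ?_) ?_
    · exact (hm.comp (by fun_prop : Measurable fun p : V × V ↦ x - p.2)).mul hψ2
    filter_upwards [Measure.quasiMeasurePreserving_fst.ae hσ1] with p hp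
    rw [norm_mul]
    calc _ ≤ (C * ((1 + ‖x‖) ^ κ * (1 + ‖p.2‖) ^ κ)) *
          (B * ‖p.1‖ ^ 2 * ((1 + ‖p.2‖) ^ k)⁻¹) := by
          gcongr
          · refine (hC _).trans ?_
            gcongr
            exact one_add_norm_sub_rpow_le hκ x p.2
          · exact hB p.2 p.1 hp
      _ = _ := by ring
  have hint2 : Integrable (fun p : V × V ↦ secondDiff v p.1 (x - p.2) * ψ p.2)
      (σ.prod volume) := by
    refine Integrable.mono' ((hσ.mul_prod (ψ.integrable_rpow_mul_norm κ)).const_mul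
      (|D| * (1 + ‖x‖) ^ κ)) (Measurable.aestronglyMeasurable ?_) ?_
    · exact (hm2.comp (by fun_prop : Measurable fun p : V × V ↦ (p.1, x - p.2))).mul
        (hψm.comp measurable_snd)
    filter_upwards [Measure.quasiMeasurePreserving_fst.ae hσ1] with p hp
    rw [norm_mul]
    calc _ ≤ (|D| * ‖p.1‖ ^ 2 * ((1 + ‖x‖) ^ κ * (1 + ‖p.2‖) ^ κ)) * ‖ψ p.2‖ := by
          gcongr
          refine (hD _ _ hp).trans ?_
          gcongr
          · exact le_abs_self D
          · exact one_add_norm_sub_rpow_le hκ x p.2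
      _ = _ := by ring
  have hswap : ∫ z, v (x - z) * ∫ y, secondDiff ψ y z ∂σ =
      ∫ z, (∫ y, secondDiff v y (x - z) ∂σ) * ψ z := by
    simp_rw [← integral_const_mul, ← integral_mul_const]
    refine (integral_integral_swap hint1).symm.trans
      (Eq.trans ?_ (integral_integral_swap hint2))
    refine integral_congr_ae (ae_of_all _ fun y ↦ ?_)
    simp only
    rw [← secondDiff_convolution' hκ hm ⟨C, hC⟩, secondDiff_convolution hκ hm ⟨C, hC⟩]
  have e1 : ∀ z, v (x - z) * φ z = (2 * τ.real Set.univ : ℝ) * (v (x - z) * ψ z) -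
      v (x - z) * ∫ y, secondDiff ψ y z ∂σ := fun z ↦ by rw [hφ]; ring
  have e2 : ∀ z, symmConv τ v (x - z) * ψ z = (2 * τ.real Set.univ : ℝ) * (v (x - z) * ψ z) -
      (∫ y, secondDiff v y (x - z) ∂σ) * ψ z := fun z ↦ by
    rw [eq_sub_of_add_eq' (h.eq (x - z))]; ring
  have i1 : Integrable (fun z ↦ v (x - z) * ∫ y, secondDiff ψ y z ∂σ) := by
    simpa only [integral_const_mul] using hint1.integral_prod_right
  have i2 : Integrable (fun z ↦ (∫ y, secondDiff v y (x - z) ∂σ) * ψ z) := by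
    simpa only [integral_mul_const] using hint2.integral_prod_right
  simp_rw [e1, e2]
  rw [integral_sub ((hi ψ x).const_mul _) i1, integral_sub ((hi ψ x).const_mul _) i2, hswap]

end Duality

section Localisation

lemma exists_norm_iteratedFDeriv_mul_pow_le {V : Type*} [NormedAddCommGroup V] [NormedSpace ℝ V]
    {f g : V → ℂ} (hf : ContDiff ℝ ∞ f) (hfs : HasCompactSupport f) (hg : ContDiff ℝ ∞ g)
    {θ₀ θ : ℝ} (hθ₀ : 0 ≤ θ₀) (hθ : θ₀ < θ) (hgθ : ∀ ξ ∈ tsupport f, ‖g ξ‖ ≤ θ₀) (l : ℕ) :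
    ∃ C, 0 ≤ C ∧ ∀ i < l, ∀ (N : ℕ) ξ,
      ‖iteratedFDeriv ℝ i (fun ξ ↦ f ξ * g ξ ^ N) ξ‖ ≤ C * θ ^ N := by
  have hθ1 : 0 < θ := hθ₀.trans_lt hθ
  induction l with
  | zero => exact ⟨0, le_rfl, fun i hi ↦ absurd hi (Nat.not_lt_zero i)⟩
  | succ l ih =>
    obtain ⟨C, hC0, hC⟩ := ih
    have hbd : ∀ j, ∃ G, ∀ ξ ∈ tsupport f, ‖iteratedFDeriv ℝ j g ξ‖ ≤ G := fun j ↦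
      IsCompact.exists_bound_of_continuousOn hfs
        (hg.continuous_iteratedFDeriv (m := j) (mod_cast le_top)).continuousOn
    choose G hG using hbd
    obtain ⟨B, hB⟩ := IsCompact.exists_bound_of_continuousOn hfs
      (hf.continuous_iteratedFDeriv (m := l) (mod_cast le_top)).continuousOn
    set D := ∑ i ∈ Finset.range l, (l.choose i : ℝ) * C * |G (l - i)| with hD
    have hD0 : 0 ≤ D := Finset.sum_nonneg fun i _ ↦ by positivity
    set C' := C + |B| + D / (θ - θ₀) with hC'
    have hsub : 0 < θ - θ₀ := sub_pos.2 hθ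
    have hq : 0 ≤ D / (θ - θ₀) := div_nonneg hD0 hsub.le
    have hC'0 : 0 ≤ C' := by positivity
    have hDC : D ≤ C' * (θ - θ₀) := by
      rw [← div_le_iff₀ hsub]
      linarith [abs_nonneg B]
    have hF : ∀ N : ℕ, ContDiff ℝ ∞ fun ξ ↦ f ξ * g ξ ^ N := fun N ↦ hf.mul (hg.pow N)
    refine ⟨C', hC'0, fun i hi N ξ ↦ ?_⟩
    rcases Nat.lt_succ_iff_lt_or_eq.1 hi with hi | rfl
    · refine (hC i hi N ξ).trans ?_
      gcongr
      linarith [abs_nonneg B]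
    by_cases hξ : ξ ∈ tsupport f
    swap
    · have : iteratedFDeriv ℝ i (fun ξ ↦ f ξ * g ξ ^ N) ξ = 0 := by
        by_contra h
        exact hξ (tsupport_mul_subset_left (support_iteratedFDeriv_subset i h))
      rw [this, norm_zero]
      positivity
    induction N with
    | zero =>
      simp only [pow_zero, mul_one]
      linarith [hB ξ hξ, le_abs_self B]
    | succ N ihN =>
      have hle := norm_iteratedFDeriv_mul_le (hF N) hg ξ (n := i) (mod_cast le_top)
      simp only [mul_assoc, ← pow_succ] at hle
      refine hle.trans ?_
      rw [Finset.sum_range_succ]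
      have h1 : ∑ j ∈ Finset.range i, (i.choose j : ℝ) *
          (‖iteratedFDeriv ℝ j (fun ξ ↦ f ξ * g ξ ^ N) ξ‖ * ‖iteratedFDeriv ℝ (i - j) g ξ‖) ≤
          D * θ ^ N := by
        rw [hD, Finset.sum_mul]
        refine Finset.sum_le_sum fun j hj ↦ ?_
        calc _ ≤ (i.choose j : ℝ) * ((C * θ ^ N) * |G (i - j)|) := by
              gcongr
              · exact hC j (Finset.mem_range.1 hj) N ξ
              · exact (hG _ ξ hξ).trans (le_abs_self _)
          _ = _ := by ring
      have h2 : (i.choose i : ℝ) * (‖iteratedFDeriv ℝ i (fun ξ ↦ f ξ * g ξ ^ N) ξ‖ *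
          ‖iteratedFDeriv ℝ (i - i) g ξ‖) ≤ C' * θ ^ N * θ₀ := by
        rw [Nat.choose_self, Nat.cast_one, one_mul, Nat.sub_self, norm_iteratedFDeriv_zero]
        gcongr
        exact hgθ ξ hξ
      have h3 := mul_le_mul_of_nonneg_right hDC (pow_nonneg hθ1.le N)
      rw [pow_succ]
      linarith

variable {V : Type*} [NormedAddCommGroup V] [InnerProductSpace ℝ V] [FiniteDimensional ℝ V]
  [MeasurableSpace V] [BorelSpace V] {σ τ : Measure V} {κ : ℝ} {v : V → ℂ}

lemma exists_norm_integral_mul_schwartz_le (hκ : 0 ≤ κ) (x : V) :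
    ∃ (S : Finset (ℕ × ℕ)) (C : ℝ), 0 ≤ C ∧ ∀ (w : V → ℂ) (B : ℝ) (φ : 𝓢(V, ℂ)),
      (∀ x, ‖w x‖ ≤ B * (1 + ‖x‖) ^ κ) →
      ‖∫ z, w (x - z) * φ z‖ ≤ B * C * S.sup (schwartzSeminormFamily ℝ V ℂ) φ := by
  obtain ⟨k, hk⟩ := exists_integrable_rpow_mul_inv_pow V κ
  refine ⟨Finset.Iic (k, 0), (1 + ‖x‖) ^ κ * 2 ^ k * ∫ z : V, (1 + ‖z‖) ^ κ * ((1 + ‖z‖) ^ k)⁻¹,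
    by positivity, fun w B φ hw ↦ ?_⟩
  have hB0 : 0 ≤ B := by simpa using (norm_nonneg _).trans (hw 0)
  set p := (Finset.Iic (k, 0)).sup (schwartzSeminormFamily ℝ V ℂ) φ with hp
  refine (norm_integral_le_of_norm_le (hk.const_mul (B * (1 + ‖x‖) ^ κ * (2 ^ k * p)))
    (ae_of_all _ fun z ↦ ?_)).trans_eq (by rw [integral_const_mul]; ring)
  have h1 : ‖φ z‖ ≤ 2 ^ k * p * ((1 + ‖z‖) ^ k)⁻¹ := by
    have := SchwartzMap.one_add_le_sup_seminorm_apply (𝕜 := ℝ) (m := (k, 0)) le_rfl le_rfl φ z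
    rw [norm_iteratedFDeriv_zero] at this
    rw [← div_eq_mul_inv, le_div_iff₀ (by positivity), mul_comm]
    exact this
  rw [norm_mul]
  calc _ ≤ (B * ((1 + ‖x‖) ^ κ * (1 + ‖z‖) ^ κ)) * (2 ^ k * p * ((1 + ‖z‖) ^ k)⁻¹) := by
        gcongr
        refine (hw _).trans ?_
        gcongr
        exact one_add_norm_sub_rpow_le hκ x z
    _ = _ := by ring

/-- The reciprocal of the full symbol. -/
noncomputable def invSymbol (σ τ : Measure V) (ξ : V) : ℂ :=
  (((2 * τ.real Set.univ + levySymbol σ ξ)⁻¹ : ℝ) : ℂ)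

lemma two_mul_add_levySymbol_pos (hτ0 : 0 < τ.real Set.univ) (ξ : V) :
    0 < 2 * τ.real Set.univ + levySymbol σ ξ := by
  linarith [levySymbol_nonneg (σ := σ) ξ]

lemma contDiff_invSymbol (hσ : Integrable (fun y ↦ ‖y‖ ^ 2) σ) (hσ1 : ∀ᵐ y ∂σ, ‖y‖ ≤ 1)
    (hτ0 : 0 < τ.real Set.univ) : ContDiff ℝ ∞ (invSymbol σ τ) :=
  Complex.ofRealCLM.contDiff.comp ((contDiff_const.add (contDiff_levySymbol hσ hσ1)).inv
    fun ξ ↦ (two_mul_add_levySymbol_pos hτ0 ξ).ne')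

lemma fourierInv_eq_sub_of_eq_mul [SFinite σ] (hσ : Integrable (fun y ↦ ‖y‖ ^ 2) σ)
    {f g : 𝓢(V, ℂ)} {c : ℝ} (h : ∀ ξ, f ξ = ((c + levySymbol σ ξ : ℝ) : ℂ) * g ξ) (z : V) :
    (𝓕⁻ f) z = (c : ℂ) * (𝓕⁻ g) z - ∫ y, secondDiff (𝓕⁻ g : 𝓢(V, ℂ)) y z ∂σ := by
  have hi : ∀ f : 𝓢(V, ℂ), Integrable (fun ξ ↦ 𝐞 ⟪ξ, z⟫ • f ξ) := fun f ↦ by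
    refine Integrable.mono' f.integrable.norm (Continuous.aestronglyMeasurable ?_)
      (ae_of_all _ fun y ↦ by simp)
    have := f.continuous
    fun_prop
  have e : ∀ ξ, (levySymbol σ ξ : ℂ) * g ξ = f ξ - c * g ξ := fun ξ ↦ by
    rw [h]; push_cast; ring
  simp only [SchwartzMap.fourierInv_coe]
  rw [← neg_eq_iff_eq_neg.2 (fourierInv_levySymbol_mul hσ g z)]
  simp_rw [e]
  rw [sub_neg_eq_add, Real.fourierInv_eq, Real.fourierInv_eq, Real.fourierInv_eq]
  simp_rw [smul_sub, ← mul_smul_comm]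
  rw [integral_sub (hi f) ((hi g).const_mul _), integral_const_mul]
  ring

lemma IsLevyHarmonic.integral_mul_fourierInv_eq_zero [SFinite σ] [IsFiniteMeasure τ] (hκ : 0 ≤ κ)
    (hσ : Integrable (fun y ↦ ‖y‖ ^ 2) σ) (hσ1 : ∀ᵐ y ∂σ, ‖y‖ ≤ 1)
    (hτ : Integrable (fun y ↦ (1 + ‖y‖) ^ κ) τ) (hτ0 : 0 < τ.real Set.univ)
    (hA : ∀ ξ, ξ ≠ 0 → 0 < levySymbol σ ξ)
    (h : IsLevyHarmonic σ τ κ v) (f : 𝓢(V, ℂ)) (hf : HasCompactSupport f)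
    (hf0 : (0 : V) ∉ tsupport f) (x : V) :
    ∫ z, v (x - z) * (𝓕⁻ f) z = 0 := by
  have hgs := contDiff_invSymbol hσ hσ1 hτ0
  have hFc : ∀ N : ℕ, HasCompactSupport fun ξ ↦ f ξ * invSymbol σ τ ξ ^ N := fun N ↦ hf.mul_right
  have hFs : ∀ N : ℕ, ContDiff ℝ ∞ fun ξ ↦ f ξ * invSymbol σ τ ξ ^ N := fun N ↦
    (f.smooth _).mul (hgs.pow N)
  set F : ℕ → 𝓢(V, ℂ) := fun N ↦ (hFc N).toSchwartzMap (hFs N) with hF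
  have hFa : ∀ N ξ, F N ξ = f ξ * invSymbol σ τ ξ ^ N := fun N ξ ↦ rfl
  have hharm : ∀ N : ℕ, IsLevyHarmonic σ τ κ ((symmConv τ)^[N] v) := fun N ↦ by
    induction N with
    | zero => exact h
    | succ N ih =>
      rw [Function.iterate_succ_apply']
      exact isLevyHarmonic_symmConv hκ hσ hσ1 hτ ih
  have hiter : ∀ N : ℕ, ∫ z, v (x - z) * (𝓕⁻ f) z =
      ∫ z, (symmConv τ)^[N] v (x - z) * (𝓕⁻ (F N)) z := fun N ↦ by
    induction N with
    | zero =>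
      have : F 0 = f := by ext ξ; simp [hFa]
      rw [this, Function.iterate_zero, id]
    | succ N ih =>
      rw [ih, Function.iterate_succ_apply']
      refine (hharm N).integral_mul_eq hκ hσ hσ1 (fun z ↦ ?_) x
      refine fourierInv_eq_sub_of_eq_mul hσ (fun ξ ↦ ?_) z
      rw [hFa, hFa, pow_succ', invSymbol]
      have : ((2 * τ.real Set.univ + levySymbol σ ξ : ℝ) : ℂ) ≠ 0 :=
        mod_cast (two_mul_add_levySymbol_pos hτ0 ξ).ne'
      rw [Complex.ofReal_inv]
      field_simp
  obtain ⟨a, ha0, ha⟩ := IsCompact.exists_forall_le' hf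
    (contDiff_levySymbol hσ hσ1).continuous.continuousOn (a := 0)
    fun ξ hξ ↦ hA ξ fun h ↦ hf0 (h ▸ hξ)
  set m := 2 * τ.real Set.univ with hm
  have hm0 : 0 < m := by positivity
  set M := m + a / 3 with hM
  set θ := (m + 2 * a / 3)⁻¹ with hθ
  have hθ0 : 0 < θ := by positivity
  have hM0 : 0 < M := by positivity
  have hMθ : M * θ < 1 := by
    rw [hθ, ← div_eq_mul_inv, div_lt_one (by positivity)]
    linarith
  obtain ⟨B, hB⟩ := exists_norm_iterate_symmConv_le hκ hτ (M := M) (by linarith) h.growth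
  obtain ⟨S, C, hC0, hC⟩ := exists_norm_integral_mul_schwartz_le (V := V) hκ x
  obtain ⟨R, hR⟩ := hf.isCompact.isBounded.subset_closedBall (0 : V)
  have hlim : Tendsto (fun N : ℕ ↦ (M ^ N : ℝ) • F N) atTop (𝓝 0) := by
    rw [(schwartz_withSeminorms ℝ V ℂ).tendsto_nhds]
    rintro ⟨k, l⟩ ε hε
    obtain ⟨D, hD0, hD⟩ := exists_norm_iteratedFDeriv_mul_pow_le (f.smooth ⊤) hf hgs
      (θ₀ := (m + a)⁻¹) (θ := θ) (by positivity)
      (inv_strictAnti₀ (by positivity) (by linarith)) (fun ξ hξ ↦ by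
        rw [invSymbol, Complex.norm_real, Real.norm_of_nonneg
          (inv_nonneg.2 (two_mul_add_levySymbol_pos hτ0 ξ).le)]
        gcongr
        exact ha ξ hξ) (l + 1)
    have hz : Tendsto (fun N : ℕ ↦ |R| ^ k * D * (M * θ) ^ N) atTop (𝓝 0) := by
      simpa using (tendsto_pow_atTop_nhds_zero_of_lt_one (by positivity) hMθ).const_mul _
    filter_upwards [hz.eventually_lt_const hε] with N hN
    rw [sub_zero]
    refine lt_of_le_of_lt ?_ hN
    rw [map_smul_eq_mul, Real.norm_of_nonneg (by positivity)]
    have : SchwartzMap.seminorm ℝ k l (F N) ≤ |R| ^ k * (D * θ ^ N) := by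
      refine SchwartzMap.seminorm_le_bound ℝ k l _ (by positivity) fun ξ ↦ ?_
      by_cases hξ : ξ ∈ tsupport f
      · gcongr
        · have : ‖ξ‖ ≤ R := by simpa using hR hξ
          exact this.trans (le_abs_self R)
        · exact hD l (Nat.lt_succ_self l) N ξ
      · have : iteratedFDeriv ℝ l (F N) ξ = 0 := by
          by_contra h
          exact hξ (tsupport_mul_subset_left (support_iteratedFDeriv_subset l h))
        rw [this, norm_zero, mul_zero]
        positivity
    calc _ ≤ M ^ N * (|R| ^ k * (D * θ ^ N)) := by gcongr; exact this
      _ = _ := by rw [mul_pow]; ring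
  have hlim2 : Tendsto (fun N : ℕ ↦ 𝓕⁻ ((M ^ N : ℝ) • F N)) atTop (𝓝 (𝓕⁻ (0 : 𝓢(V, ℂ)))) :=
    (ContinuousFourierInv.continuous_fourierInv.tendsto _).comp hlim
  have h0 : 𝓕⁻ (0 : 𝓢(V, ℂ)) = 0 := by simp
  rw [h0, (schwartz_withSeminorms ℝ V ℂ).tendsto_nhds'] at hlim2
  have hB0 : 0 ≤ B := by
    have := (norm_nonneg _).trans (hB 0 0)
    simpa using this
  have hbound : ∀ ε > 0, ‖∫ z, v (x - z) * (𝓕⁻ f) z‖ ≤ B * C * ε := fun ε hε ↦ by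
    obtain ⟨N, hN⟩ := (hlim2 S ε hε).exists
    rw [sub_zero, FourierInvSMul.fourierInv_smul, map_smul_eq_mul,
      Real.norm_of_nonneg (by positivity)] at hN
    rw [hiter N]
    calc _ ≤ _ := hC _ (B * M ^ N) (𝓕⁻ (F N)) (hB N)
      _ = B * C * (M ^ N * S.sup (schwartzSeminormFamily ℝ V ℂ) (𝓕⁻ (F N))) := by ring
      _ ≤ _ := by gcongr
  have htend : Tendsto (fun ε : ℝ ↦ B * C * ε) (𝓝[>] 0) (𝓝 0) := by
    have : Tendsto (fun ε : ℝ ↦ B * C * ε) (𝓝 0) (𝓝 (B * C * 0)) := tendsto_id.const_mul _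
    rw [mul_zero] at this
    exact this.mono_left nhdsWithin_le_nhds
  exact norm_le_zero_iff.1 (ge_of_tendsto htend (eventually_mem_nhdsWithin.mono fun ε hε ↦
    hbound ε hε))

end Localisation

section Reproducing

variable {V : Type*} [NormedAddCommGroup V] [InnerProductSpace ℝ V] [FiniteDimensional ℝ V]
  [MeasurableSpace V] [BorelSpace V] {σ τ : Measure V} {κ : ℝ} {v : V → ℂ}

variable (V) in
lemma exists_schwartz_eq_one_near_zero :
    ∃ χ : 𝓢(V, ℂ), HasCompactSupport χ ∧ ∀ᶠ ξ in 𝓝 (0 : V), χ ξ = 1 := by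
  let b : ContDiffBump (0 : V) := ⟨1, 2, one_pos, one_lt_two⟩
  have hc : HasCompactSupport fun ξ ↦ (b ξ : ℂ) :=
    b.hasCompactSupport.comp_left (g := fun t : ℝ ↦ (t : ℂ)) Complex.ofReal_zero
  have hs : ContDiff ℝ ∞ fun ξ ↦ (b ξ : ℂ) := Complex.ofRealCLM.contDiff.comp b.contDiff
  refine ⟨hc.toSchwartzMap hs, hc, ?_⟩
  filter_upwards [b.eventuallyEq_one] with ξ hξ
  simp [HasCompactSupport.toSchwartzMap_toFun, hξ]

lemma fourierInv_comp_smul (f : V → ℂ) {r : ℝ} (hr : 0 < r) (z : V) :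
    𝓕⁻ (fun ξ ↦ f (r • ξ)) z = ((r ^ Module.finrank ℝ V)⁻¹ : ℝ) • 𝓕⁻ f (r⁻¹ • z) := by
  rw [Real.fourierInv_eq, Real.fourierInv_eq]
  have := Measure.integral_comp_smul volume (fun ξ ↦ 𝐞 ⟪ξ, r⁻¹ • z⟫ • f ξ) r
  rw [abs_of_nonneg (by positivity)] at this
  rw [← this]
  refine integral_congr_ae (ae_of_all _ fun ξ ↦ ?_)
  simp only [inner_smul_left, inner_smul_right, RCLike.conj_to_real]
  rw [← mul_assoc, inv_mul_cancel₀ hr.ne', one_mul]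

lemma integral_mul_fourierInv_comp_smul (f : V → ℂ) {r : ℝ} (hr : 0 < r) (x : V) :
    ∫ z, v (x - z) * 𝓕⁻ (fun ξ ↦ f (r • ξ)) z = ∫ z, v (x - r • z) * 𝓕⁻ f z := by
  have := Measure.integral_comp_smul volume (fun z ↦ v (x - r • z) * 𝓕⁻ f z) r⁻¹
  simp only [smul_inv_smul₀ hr.ne', inv_pow, inv_inv] at this
  rw [abs_of_nonneg (by positivity)] at this
  simp_rw [fourierInv_comp_smul f hr, mul_smul_comm]
  rw [integral_smul, this, inv_smul_smul₀ (by positivity)]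

lemma integral_fourierInv_schwartz (f : 𝓢(V, ℂ)) : ∫ z, (𝓕⁻ f) z = f 0 := by
  have h : 𝓕 (𝓕⁻ f) = f := FourierTransform.fourier_fourierInv_eq f
  have h0 : 𝓕 (𝓕⁻ f : 𝓢(V, ℂ)) (0 : V) = f 0 := by rw [h]
  rw [← h0, SchwartzMap.fourier_coe, Real.fourier_eq]
  simp

lemma tendsto_integral_comp_smul_mul (hκ : 0 ≤ κ) (hv : Continuous v)
    (hg : ∃ C, ∀ x, ‖v x‖ ≤ C * (1 + ‖x‖) ^ κ) (X : 𝓢(V, ℂ)) (x : V) :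
    Tendsto (fun r : ℝ ↦ ∫ z, v (x - r • z) * X z) (𝓝[>] 0) (𝓝 (v x * ∫ z, X z)) := by
  obtain ⟨C, hC⟩ := hg
  have hC0 : 0 ≤ C := by simpa using (norm_nonneg _).trans (hC 0)
  have hX := X.continuous
  rw [← integral_const_mul]
  refine tendsto_integral_filter_of_dominated_convergence
    (fun z ↦ C * (1 + ‖x‖) ^ κ * ((1 + ‖z‖) ^ κ * ‖X z‖))
    (Eventually.of_forall fun r ↦ Continuous.aestronglyMeasurable (by fun_prop)) ?_
    ((X.integrable_rpow_mul_norm κ).const_mul _) (ae_of_all _ fun z ↦ ?_)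
  · filter_upwards [Ioc_mem_nhdsGT (zero_lt_one (α := ℝ))] with r hr
    refine ae_of_all _ fun z ↦ ?_
    rw [norm_mul]
    have : ‖r • z‖ ≤ ‖z‖ := by
      rw [norm_smul, Real.norm_of_nonneg hr.1.le]
      exact mul_le_of_le_one_left (norm_nonneg z) hr.2
    calc _ ≤ (C * ((1 + ‖x‖) ^ κ * (1 + ‖z‖) ^ κ)) * ‖X z‖ := by
          gcongr
          refine (hC _).trans ?_
          gcongr
          refine (one_add_norm_sub_rpow_le hκ x (r • z)).trans ?_
          gcongr
      _ = _ := by ring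
  · have : Continuous fun r : ℝ ↦ v (x - r • z) * X z := by fun_prop
    have := this.tendsto 0
    simp only [zero_smul, sub_zero] at this
    exact this.mono_left nhdsWithin_le_nhds

variable (V) in
lemma exists_schwartz_reproducing : ∃ X : 𝓢(V, ℂ), ∀ (σ τ : Measure V) (κ : ℝ) (v : V → ℂ)
    [SFinite σ] [IsFiniteMeasure τ], 0 ≤ κ → Integrable (fun y ↦ ‖y‖ ^ 2) σ →
    (∀ᵐ y ∂σ, ‖y‖ ≤ 1) → Integrable (fun y ↦ (1 + ‖y‖) ^ κ) τ → 0 < τ.real Set.univ →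
    (∀ ξ, ξ ≠ 0 → 0 < levySymbol σ ξ) → IsLevyHarmonic σ τ κ v → Continuous v →
    ∀ r : ℝ, 0 < r → ∀ x, v x = ∫ z, v (x - r • z) * X z := by
  obtain ⟨χ, hχ, hχ1⟩ := exists_schwartz_eq_one_near_zero V
  refine ⟨𝓕⁻ χ, fun σ τ κ v _ _ hκ hσ hσ1 hτ hτ0 hA h hc r hr x ↦ ?_⟩
  have hsupp : ∀ r : ℝ, 0 < r → HasCompactSupport fun ξ ↦ χ (r • ξ) := fun r hr ↦
    hχ.comp_homeomorph (Homeomorph.smulOfNeZero r hr.ne')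
  have hsmooth : ∀ r : ℝ, ContDiff ℝ ∞ fun ξ ↦ χ (r • ξ) := fun r ↦
    (χ.smooth ⊤).comp (contDiff_const_smul r)
  have hone : ∀ r : ℝ, ∀ᶠ ξ in 𝓝 (0 : V), χ (r • ξ) = 1 := fun r ↦ by
    have : Tendsto (fun ξ : V ↦ r • ξ) (𝓝 0) (𝓝 0) := by
      simpa using (continuous_const_smul r).tendsto (0 : V)
    exact this.eventually hχ1
  have hindep : ∀ r s : ℝ, 0 < r → 0 < s →
      ∫ z, v (x - r • z) * (𝓕⁻ χ) z = ∫ z, v (x - s • z) * (𝓕⁻ χ) z := by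
    intro r s hr hs
    set f := (hsupp r hr).toSchwartzMap (hsmooth r) with hf
    set g := (hsupp s hs).toSchwartzMap (hsmooth s) with hg
    have hfg : HasCompactSupport (f - g : 𝓢(V, ℂ)) := (hsupp r hr).sub (hsupp s hs)
    have h0 : (0 : V) ∉ tsupport (f - g : 𝓢(V, ℂ)) := by
      rw [notMem_tsupport_iff_eventuallyEq]
      filter_upwards [hone r, hone s] with ξ h1 h2
      change χ (r • ξ) - χ (s • ξ) = 0
      rw [h1, h2, sub_self]
    have key := h.integral_mul_fourierInv_eq_zero hκ hσ hσ1 hτ hτ0 hA (f - g) hfg h0 x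
    have hi := integrable_comp_sub_mul_schwartz hκ h.measurable h.growth
    have hsub : 𝓕⁻ (f - g) = 𝓕⁻ f - 𝓕⁻ g := map_sub (FourierTransform.fourierInvCLM ℂ 𝓢(V, ℂ)) f g
    simp_rw [hsub, sub_apply, mul_sub] at key
    rw [integral_sub (hi _ x) (hi _ x), sub_eq_zero] at key
    simp only [SchwartzMap.fourierInv_coe] at key ⊢
    rwa [← integral_mul_fourierInv_comp_smul χ hr, ← integral_mul_fourierInv_comp_smul χ hs]
  have hlim := tendsto_integral_comp_smul_mul hκ hc h.growth (𝓕⁻ χ) x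
  rw [integral_fourierInv_schwartz, hχ1.self_of_nhds, mul_one] at hlim
  refine tendsto_nhds_unique hlim (tendsto_const_nhds.congr' ?_)
  filter_upwards [self_mem_nhdsWithin] with s hs using hindep r s hr hs

lemma secondDiff_eq_zero_of_reproducing (hκ : 0 ≤ κ) (hκ2 : κ < 2) (hm : Measurable v)
    (hg : ∃ C, ∀ x, ‖v x‖ ≤ C * (1 + ‖x‖) ^ κ) (X : 𝓢(V, ℂ))
    (hX : ∀ r : ℝ, 0 < r → ∀ x, v x = ∫ z, v (x - r • z) * X z) (h x : V) :
    secondDiff v h x = 0 := by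
  obtain ⟨C, hC⟩ := hg
  have hC0 : 0 ≤ C := by simpa using (norm_nonneg _).trans (hC 0)
  obtain ⟨k, hk⟩ := exists_integrable_rpow_mul_inv_pow V κ
  obtain ⟨B, hB0, hB⟩ := X.norm_secondDiff_le k
  set I := ∫ z : V, (1 + ‖z‖) ^ κ * ((1 + ‖z‖) ^ k)⁻¹ with hI
  have hbound : ∀ r : ℝ, max 1 ‖h‖ ≤ r →
      ‖secondDiff v h x‖ ≤ C * (1 + ‖x‖) ^ κ * B * ‖h‖ ^ 2 * I * r ^ (-(2 - κ)) := by
    intro r hr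
    have hr1 : 1 ≤ r := (le_max_left _ _).trans hr
    have hr0 : 0 < r := by linarith
    have hgr : ∀ z, ‖v (r • z)‖ ≤ C * r ^ κ * (1 + ‖z‖) ^ κ := fun z ↦ by
      refine (hC _).trans ?_
      rw [mul_assoc, ← Real.mul_rpow hr0.le (by positivity)]
      gcongr
      rw [norm_smul, Real.norm_of_nonneg hr0.le]
      linarith
    have hW : ∀ y, v y = ∫ z, v (r • (r⁻¹ • y - z)) * X z := fun y ↦ by
      simp_rw [smul_sub, smul_inv_smul₀ hr0.ne']
      exact hX r hr0 y
    have e : secondDiff v h x = secondDiff (fun y ↦ ∫ z, v (r • (y - z)) * X z)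
        (r⁻¹ • h) (r⁻¹ • x) := by
      simp only [secondDiff, ← smul_add, ← smul_sub r⁻¹, ← hW]
    rw [e, secondDiff_convolution' (v := fun y ↦ v (r • y)) hκ (by fun_prop) ⟨_, hgr⟩]
    refine (norm_integral_le_of_norm_le
      (hk.const_mul (C * (1 + ‖x‖) ^ κ * r ^ κ * (B * (r⁻¹ * ‖h‖) ^ 2)))
      (ae_of_all _ fun z ↦ ?_)).trans_eq ?_
    · rw [norm_mul, smul_sub, smul_inv_smul₀ hr0.ne']
      have hh : ‖r⁻¹ • h‖ = r⁻¹ * ‖h‖ := by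
        rw [norm_smul, Real.norm_of_nonneg (by positivity)]
      calc _ ≤ (C * ((1 + ‖x‖) ^ κ * (r ^ κ * (1 + ‖z‖) ^ κ))) *
            (B * ‖r⁻¹ • h‖ ^ 2 * ((1 + ‖z‖) ^ k)⁻¹) := by
            gcongr
            · refine (hC _).trans ?_
              gcongr
              refine (one_add_norm_sub_rpow_le hκ x (r • z)).trans ?_
              rw [← Real.mul_rpow hr0.le (by positivity)]
              gcongr
              rw [norm_smul, Real.norm_of_nonneg hr0.le]
              linarith
            · refine hB z _ ?_
              rw [hh, inv_mul_le_one₀ hr0]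
              exact (le_max_right _ _).trans hr
        _ = _ := by rw [hh]; ring
    · rw [integral_const_mul, ← hI, neg_sub, Real.rpow_sub hr0, Real.rpow_two]
      field_simp
  have hlim := (tendsto_rpow_neg_atTop (sub_pos.2 hκ2)).const_mul
    (C * (1 + ‖x‖) ^ κ * B * ‖h‖ ^ 2 * I)
  rw [mul_zero] at hlim
  exact norm_le_zero_iff.1 (ge_of_tendsto hlim ((eventually_ge_atTop _).mono hbound))

end Reproducing

section Liouville

variable {V : Type*} [NormedAddCommGroup V] [InnerProductSpace ℝ V] [FiniteDimensional ℝ V]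
  {κ : ℝ}

theorem secondDiff_eq_zero_of_harmonic [MeasurableSpace V] [BorelSpace V] {σ τ : Measure V}
    {v : V → ℂ} [SFinite σ] [IsFiniteMeasure τ] (hκ : 0 ≤ κ) (hκ2 : κ < 2)
    (hσ : Integrable (fun y ↦ ‖y‖ ^ 2) σ) (hσ1 : ∀ᵐ y ∂σ, ‖y‖ ≤ 1)
    (hτ : Integrable (fun y ↦ (1 + ‖y‖) ^ κ) τ) (hτ0 : 0 < τ.real Set.univ)
    (hA : ∀ ξ, ξ ≠ 0 → 0 < levySymbol σ ξ) (hv : ContDiff ℝ 2 v)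
    (hg : ∃ C, ∀ x, ‖v x‖ ≤ C * (1 + ‖x‖) ^ κ)
    (heq : ∀ x, ∫ y, secondDiff v y x ∂σ + symmConv τ v x = (2 * τ.real Set.univ : ℝ) * v x)
    (h x : V) : secondDiff v h x = 0 := by
  obtain ⟨X, hX⟩ := exists_schwartz_reproducing V
  have hc := hv.continuous
  have hcd : Continuous (fun z ↦ secondDiff v h (-z)) := by
    unfold secondDiff
    fun_prop
  have hconv : ∀ ψ : 𝓢(V, ℂ), HasCompactSupport ψ → ∫ z, secondDiff v h (-z) * ψ z = 0 := by
    intro ψ hψ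
    have hw := isLevyHarmonic_convolution hκ hσ hσ1 hτ hv hg heq ψ hψ
    have := secondDiff_eq_zero_of_reproducing hκ hκ2 hw.measurable hw.growth X
      (hX σ τ κ _ hκ hσ hσ1 hτ hτ0 hA hw (continuous_convolution_schwartz hc ψ hψ)) h 0
    rw [secondDiff_convolution hκ hc.measurable hg] at this
    simpa using this
  have hae := ae_eq_zero_of_integral_contDiff_smul_eq_zero (μ := (volume : Measure V))
    hcd.locallyIntegrable fun g hg hgc ↦ by
      have hgc' : HasCompactSupport fun z ↦ (g z : ℂ) :=
        hgc.comp_left (g := fun t : ℝ ↦ (t : ℂ)) Complex.ofReal_zero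
      have hg' : ContDiff ℝ ∞ fun z ↦ (g z : ℂ) := Complex.ofRealCLM.contDiff.comp hg
      rw [← hconv (hgc'.toSchwartzMap hg') hgc']
      refine integral_congr_ae (ae_of_all _ fun z ↦ ?_)
      simp [HasCompactSupport.toSchwartzMap_toFun, mul_comm]
  have := congrFun ((hcd.ae_eq_iff_eq volume continuous_const).1 hae) (-x)
  simpa using this

lemma exists_affine_of_secondDiff_eq_zero {u : V → ℝ} (hu : Continuous u)
    (h : ∀ h x, u (x + h) + u (x - h) - 2 * u x = 0) :
    ∃ (ϖ : V) (c : ℝ), ∀ x, u x = ⟪ϖ, x⟫ + c := by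
  have hadd : ∀ a b, u (a + b) - u 0 = u a - u 0 + (u b - u 0) := fun a b ↦ by
    have h1 := h ((2 : ℝ)⁻¹ • (a - b)) ((2 : ℝ)⁻¹ • (a + b))
    have h2 := h ((2 : ℝ)⁻¹ • (a + b)) ((2 : ℝ)⁻¹ • (a + b))
    have e1 : (2 : ℝ)⁻¹ • (a + b) + (2 : ℝ)⁻¹ • (a - b) = a := by module
    have e2 : (2 : ℝ)⁻¹ • (a + b) - (2 : ℝ)⁻¹ • (a - b) = b := by module
    have e3 : (2 : ℝ)⁻¹ • (a + b) + (2 : ℝ)⁻¹ • (a + b) = a + b := by module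
    rw [e1, e2] at h1
    rw [e3, sub_self] at h2
    linarith
  let L := (AddMonoidHom.mk' (fun x ↦ u x - u 0) hadd).toRealLinearMap (hu.sub continuous_const)
  refine ⟨(InnerProductSpace.toDual ℝ V).symm L, u 0, fun x ↦ ?_⟩
  rw [InnerProductSpace.toDual_symm_apply]
  exact (sub_add_cancel (u x) (u 0)).symm

lemma eq_zero_of_abs_inner_add_le {ϖ : V} {c K : ℝ} (hκ : κ < 1)
    (h : ∀ x, |⟪ϖ, x⟫ + c| ≤ K * (1 + ‖x‖ ^ κ)) : ϖ = 0 := by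
  have hlim : Tendsto (fun t : ℝ ↦ (K - c) * t⁻¹ + K * ‖ϖ‖ ^ κ * t ^ (-(1 - κ))) atTop (𝓝 0) := by
    simpa using (tendsto_inv_atTop_zero.const_mul (K - c)).add
      ((tendsto_rpow_neg_atTop (sub_pos.2 hκ)).const_mul (K * ‖ϖ‖ ^ κ))
  have hle : ‖ϖ‖ ^ 2 ≤ 0 := by
    refine ge_of_tendsto hlim ?_
    filter_upwards [eventually_gt_atTop 0] with t ht
    have h1 := (le_abs_self _).trans (h (t • ϖ))
    rw [inner_smul_right, real_inner_self_eq_norm_sq, norm_smul, Real.norm_of_nonneg ht.le,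
      Real.mul_rpow ht.le (norm_nonneg _)] at h1
    rw [neg_sub, Real.rpow_sub_one ht.ne']
    field_simp
    linarith
  exact norm_eq_zero.1 (pow_eq_zero_iff two_ne_zero |>.1 (hle.antisymm (sq_nonneg _)))

end Liouville

section LevyMeasure

variable {V : Type*} [NormedAddCommGroup V] [InnerProductSpace ℝ V] [MeasurableSpace V]
  {s : ℝ} {μ : Measure (Metric.sphere (0 : V) 1)}

/-- The `2s`-stable Lévy measure with spectral measure `μ`. -/
noncomputable def levyMeasure (s : ℝ) (μ : Measure (Metric.sphere (0 : V) 1)) : Measure V :=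
  ((μ.prod (volume : Measure ℝ)).withDensity
    fun p ↦ ENNReal.ofReal (|p.2| ^ (1 + 2 * s))⁻¹).map fun p ↦ p.2 • (p.1 : V)

lemma measurable_levyDensity : Measurable fun p : Metric.sphere (0 : V) 1 × ℝ ↦
    ENNReal.ofReal (|p.2| ^ (1 + 2 * s))⁻¹ := by
  fun_prop

variable [FiniteDimensional ℝ V] [BorelSpace V]

lemma measurable_snd_smul_fst :
    Measurable fun p : Metric.sphere (0 : V) 1 × ℝ ↦ p.2 • (p.1 : V) := by
  fun_prop

lemma integral_levyMeasure {F : Type*} [NormedAddCommGroup F] [NormedSpace ℝ F] {f : V → F}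
    (hf : AEStronglyMeasurable f (levyMeasure s μ)) :
    ∫ y, f y ∂levyMeasure s μ = ∫ p : Metric.sphere (0 : V) 1 × ℝ,
      (|p.2| ^ (1 + 2 * s))⁻¹ • f (p.2 • (p.1 : V)) ∂(μ.prod volume) := by
  rw [levyMeasure, integral_map measurable_snd_smul_fst.aemeasurable hf,
    integral_withDensity_eq_integral_toReal_smul measurable_levyDensity
      (ae_of_all _ fun _ ↦ ENNReal.ofReal_lt_top)]
  refine integral_congr_ae (ae_of_all _ fun p ↦ ?_)
  dsimp only
  rw [ENNReal.toReal_ofReal (by positivity)]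

lemma integrable_comp_norm_levyMeasure [IsFiniteMeasure μ] {g : ℝ → ℝ} (hgm : Measurable g)
    (hg : IntegrableOn (fun r ↦ (r ^ (1 + 2 * s))⁻¹ * g r) (Set.Ioi 0)) :
    Integrable (fun y ↦ g ‖y‖) (levyMeasure s μ) := by
  have hm : Measurable fun y : V ↦ g ‖y‖ := hgm.comp measurable_norm
  rw [levyMeasure, integrable_map_measure hm.aestronglyMeasurable
      measurable_snd_smul_fst.aemeasurable,
    integrable_withDensity_iff_integrable_smul' measurable_levyDensity
      (ae_of_all _ fun _ ↦ ENNReal.ofReal_lt_top)]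
  have h1 : Integrable fun r : ℝ ↦ (|r| ^ (1 + 2 * s))⁻¹ * g |r| :=
    (integrable_fun_norm_addHaar (E := ℝ) volume
      (f := fun r ↦ (r ^ (1 + 2 * s))⁻¹ * g r)).2 (by simpa using hg)
  refine (h1.comp_snd μ).congr (ae_of_all _ fun p ↦ ?_)
  dsimp only [Function.comp]
  rw [ENNReal.toReal_ofReal (by positivity), norm_smul, norm_eq_of_mem_sphere, mul_one,
    Real.norm_eq_abs, smul_eq_mul]

lemma ae_ae_of_ae_levyMeasure [SFinite μ] {p : V → Prop} (hp : MeasurableSet {y | p y})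
    (h : ∀ᵐ y ∂levyMeasure s μ, p y) :
    ∀ᵐ ϑ : Metric.sphere (0 : V) 1 ∂μ, ∀ᵐ r : ℝ, r ≠ 0 → p (r • (ϑ : V)) := by
  rw [levyMeasure, ae_map_iff measurable_snd_smul_fst.aemeasurable hp,
    ae_withDensity_iff measurable_levyDensity] at h
  filter_upwards [Measure.ae_ae_of_ae_prod h] with ϑ hϑ
  filter_upwards [hϑ] with r hr hr0
  refine hr ?_
  have : 0 < (|r| ^ (1 + 2 * s))⁻¹ := by positivity
  simpa using this

lemma exists_mem_Ioo_of_ae {a b : ℝ} (hab : a < b) {p : ℝ → Prop} (h : ∀ᵐ r, p r) :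
    ∃ r ∈ Set.Ioo a b, p r := by
  by_contra! hc
  have : volume (Set.Ioo a b) = 0 := measure_mono_null (fun r hr ↦ hc r hr) h
  simp [hab.not_ge] at this

variable (s μ) in
/-- The part of the stable Lévy measure carrying jumps of size at most one. -/
noncomputable def smallJumps : Measure V := (levyMeasure s μ).restrict (Metric.closedBall 0 1)

variable (s μ) in
/-- The part of the stable Lévy measure carrying jumps of size larger than one. -/
noncomputable def largeJumps : Measure V := (levyMeasure s μ).restrict (Metric.closedBall 0 1)ᶜ

instance [SFinite μ] : SFinite (smallJumps s μ) := by
  unfold smallJumps levyMeasure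
  infer_instance

lemma integrable_norm_sq_smallJumps [IsFiniteMeasure μ] (hs : s < 1) :
    Integrable (fun y ↦ ‖y‖ ^ 2) (smallJumps s μ) := by
  have h : Integrable (fun y ↦ (Set.Iic (1 : ℝ)).indicator (fun r ↦ r ^ 2) ‖y‖)
      (levyMeasure s μ) := by
    refine integrable_comp_norm_levyMeasure ((by fun_prop : Measurable fun r : ℝ ↦ r ^ 2).indicator
      measurableSet_Iic) ?_
    have hi := (intervalIntegrable_iff_integrableOn_Ioc_of_le zero_le_one).1
      (intervalIntegral.intervalIntegrable_rpow' (a := 0) (b := 1) (r := 1 - 2 * s) (by linarith))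
    rw [← integrable_indicator_iff measurableSet_Ioc] at hi
    refine hi.integrableOn.congr_fun (fun r hr ↦ ?_) measurableSet_Ioi
    rw [Set.mem_Ioi] at hr
    by_cases h1 : r ≤ 1
    · rw [Set.indicator_of_mem (by exact ⟨hr, h1⟩), Set.indicator_of_mem (by exact h1),
        ← Real.rpow_neg hr.le, ← Real.rpow_natCast, ← Real.rpow_add hr]
      congr 1
      push_cast
      ring
    · rw [Set.indicator_of_notMem (by simp [h1]), Set.indicator_of_notMem (by simp [h1]), mul_zero]
  rw [smallJumps, ← IntegrableOn,
    ← integrable_indicator_iff Metric.isClosed_closedBall.measurableSet]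
  refine h.congr (ae_of_all _ fun y ↦ ?_)
  by_cases h1 : ‖y‖ ≤ 1 <;> simp [Set.indicator, h1]

lemma integrable_rpow_largeJumps [IsFiniteMeasure μ] {κ : ℝ} (hκ0 : 0 ≤ κ) (hκ : κ < 2 * s) :
    Integrable (fun y ↦ (1 + ‖y‖) ^ κ) (largeJumps s μ) := by
  have h : Integrable (fun y ↦ (Set.Ioi (1 : ℝ)).indicator (fun r ↦ (1 + r) ^ κ) ‖y‖)
      (levyMeasure s μ) := by
    refine integrable_comp_norm_levyMeasure
      ((by fun_prop : Measurable fun r : ℝ ↦ (1 + r) ^ κ).indicator measurableSet_Ioi) ?_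
    have hi := (integrableOn_Ioi_rpow_of_lt (a := κ - (1 + 2 * s)) (by linarith) one_pos).const_mul
      (2 ^ κ)
    rw [← IntegrableOn, ← integrable_indicator_iff measurableSet_Ioi] at hi
    refine hi.integrableOn.mono' (by
      refine Measurable.aestronglyMeasurable (Measurable.mul (by fun_prop) ?_)
      exact (by fun_prop : Measurable fun r : ℝ ↦ (1 + r) ^ κ).indicator measurableSet_Ioi) ?_
    refine (ae_restrict_iff' measurableSet_Ioi).2 (ae_of_all _ fun r hr ↦ ?_)
    rw [Set.mem_Ioi] at hr
    by_cases h1 : 1 < r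
    · rw [Set.indicator_of_mem (by exact h1), Set.indicator_of_mem (by exact h1),
        Real.norm_of_nonneg (by positivity), Real.rpow_sub hr, mul_div_assoc', div_eq_inv_mul,
        ← Real.mul_rpow two_pos.le hr.le]
      gcongr
      linarith
    · rw [Set.indicator_of_notMem (by simpa using h1), Set.indicator_of_notMem (by simpa using h1),
        mul_zero, norm_zero]
  rw [largeJumps, ← IntegrableOn,
    ← integrable_indicator_iff Metric.isClosed_closedBall.measurableSet.compl]
  refine h.congr (ae_of_all _ fun y ↦ ?_)
  by_cases h1 : ‖y‖ ≤ 1 <;> simp [Set.indicator, h1]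

lemma isFiniteMeasure_largeJumps [IsFiniteMeasure μ] (hs : 0 < s) :
    IsFiniteMeasure (largeJumps s μ) := by
  have := integrable_rpow_largeJumps (s := s) (μ := μ) le_rfl (by linarith : (0 : ℝ) < 2 * s)
  simpa [integrable_const_iff] using this

lemma largeJumps_ne_zero [SFinite μ] (hμ : μ ≠ 0) : largeJumps s μ ≠ 0 := by
  intro h0
  rw [largeJumps, Measure.restrict_eq_zero] at h0
  have hp : MeasurableSet {y : V | ‖y‖ ≤ 1} := measurableSet_le (by fun_prop) (by fun_prop)
  have h := ae_ae_of_ae_levyMeasure (s := s) (μ := μ) (p := fun y ↦ ‖y‖ ≤ 1) hp (by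
    rw [ae_iff]
    convert h0 using 2
    ext y
    simp)
  refine hμ (ae_eq_bot.1 (eventually_false_iff_eq_bot.1 ?_))
  filter_upwards [h] with ϑ hϑ
  obtain ⟨r, hr, hr1⟩ := exists_mem_Ioo_of_ae one_lt_two hϑ
  have := hr1 (by linarith [hr.1])
  rw [norm_smul, norm_eq_of_mem_sphere, mul_one, Real.norm_of_nonneg (by linarith [hr.1])] at this
  linarith [hr.1]

lemma levySymbol_smallJumps_pos [IsFiniteMeasure μ] (hs : s < 1) {ξ : V}
    (hξ : ¬ ∀ᵐ ϑ : Metric.sphere (0 : V) 1 ∂μ, ⟪(ϑ : V), ξ⟫ = 0) :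
    0 < levySymbol (smallJumps s μ) ξ := by
  refine (levySymbol_nonneg ξ).lt_of_ne' fun h0 ↦ hξ ?_
  rw [levySymbol, integral_eq_zero_iff_of_nonneg (fun _ ↦ two_sub_two_mul_cos_nonneg _)
    (integrable_two_sub_two_mul_cos (integrable_norm_sq_smallJumps hs) ξ), smallJumps] at h0
  have h := ae_ae_of_ae_levyMeasure (p := fun y ↦ ‖y‖ ≤ 1 →
      Real.cos (2 * Real.pi * ⟪y, ξ⟫) = 1) ?_ (by
    filter_upwards [(ae_restrict_iff' Metric.isClosed_closedBall.measurableSet).1 h0] with y hy hy1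
    have := hy (by simpa using hy1)
    simp only [Pi.zero_apply] at this
    linarith)
  · filter_upwards [h] with ϑ hϑ
    by_contra hne
    have hpos : 0 < |⟪(ϑ : V), ξ⟫| := abs_pos.2 hne
    obtain ⟨r, hr, hr1⟩ := exists_mem_Ioo_of_ae
      (lt_min one_pos (inv_pos.2 hpos) : 0 < min 1 |⟪(ϑ : V), ξ⟫|⁻¹) hϑ
    have hr2 : r * |⟪(ϑ : V), ξ⟫| < 1 := by
      rw [← lt_div_iff₀ hpos, one_div]
      exact hr.2.trans_le (min_le_right _ _)
    have hcos := hr1 hr.1.ne' (by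
      rw [norm_smul, norm_eq_of_mem_sphere, mul_one, Real.norm_of_nonneg hr.1.le]
      exact hr.2.le.trans (min_le_left _ _))
    have habs : |2 * Real.pi * ⟪r • (ϑ : V), ξ⟫| < 2 * Real.pi := by
      rw [real_inner_smul_left, abs_mul, abs_mul r, abs_of_pos hr.1, abs_of_pos Real.two_pi_pos]
      exact mul_lt_of_lt_one_right Real.two_pi_pos hr2
    rw [Real.cos_eq_one_iff_of_lt_of_lt (abs_lt.1 habs).1 (abs_lt.1 habs).2,
      real_inner_smul_left] at hcos
    simp [Real.pi_ne_zero, hr.1.ne', hne] at hcos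
  · refine MeasurableSet.imp (measurableSet_le (by fun_prop) (by fun_prop))
      (measurableSet_eq_fun (by fun_prop) (by fun_prop))

lemma integral_smallJumps_add_symmConv_largeJumps [IsFiniteMeasure μ] (hs0 : 0 < s) (hs1 : s < 1)
    {κ : ℝ} (hκ0 : 0 ≤ κ) (hκ : κ < 2 * s) {v : V → ℂ} (hv : ContDiff ℝ 2 v)
    (hg : ∃ C, ∀ x, ‖v x‖ ≤ C * (1 + ‖x‖) ^ κ) {x : V}
    (heq : ∫ y, secondDiff v y x ∂levyMeasure s μ = 0) :
    ∫ y, secondDiff v y x ∂smallJumps s μ + symmConv (largeJumps s μ) v x =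
      (2 * (largeJumps s μ).real Set.univ : ℝ) * v x := by
  have := isFiniteMeasure_largeJumps (μ := μ) hs0
  have hsum := integrable_symm_sum hκ0 (integrable_rpow_largeJumps (μ := μ) hκ0 hκ)
    hv.continuous.measurable hg x
  have hl : Integrable (fun y ↦ secondDiff v y x) (largeJumps s μ) :=
    hsum.sub (integrable_const _)
  have hsm : Integrable (fun y ↦ secondDiff v y x) (smallJumps s μ) := by
    obtain ⟨M, hM⟩ := (isCompact_closedBall x 1).exists_bound_of_continuousOn
      (hv.continuous_iteratedFDeriv le_rfl).norm.continuousOn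
    have hc := hv.continuous
    refine ((integrable_norm_sq_smallJumps hs1).const_mul M).mono' (by
      unfold secondDiff
      exact Continuous.aestronglyMeasurable (by fun_prop)) ?_
    refine (ae_restrict_iff' Metric.isClosed_closedBall.measurableSet).2 (ae_of_all _ fun y hy ↦ ?_)
    refine norm_secondDiff_le_of_contDiff hv fun z hz ↦ ?_
    simpa using hM z (Metric.closedBall_subset_closedBall (by simpa using hy) hz)
  have hint : ∫ y, secondDiff v y x ∂largeJumps s μ =
      symmConv (largeJumps s μ) v x - (2 * (largeJumps s μ).real Set.univ : ℝ) * v x := by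
    simp only [secondDiff]
    rw [integral_sub hsum (integrable_const _), integral_const, symmConv]
    congr 1
    rw [Complex.real_smul]
    push_cast
    ring
  rw [← Measure.restrict_add_restrict_compl (μ := levyMeasure s μ)
    (Metric.isClosed_closedBall (x := (0 : V)) (ε := 1)).measurableSet] at heq
  change ∫ y, secondDiff v y x ∂(smallJumps s μ + largeJumps s μ) = 0 at heq
  rw [integral_add_measure hsm hl, hint] at heq
  linear_combination heq

end LevyMeasure

end Helpers

/-- If `u ∈ C²(ℝⁿ)` solves `ℐu = 0` in `ℝⁿ` and `|u(x)| ≤ K(1+|x|^κ)` with `κ ∈ [0,2s)`,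
then `u` is affine, `u(x) = ϖ·x + c`; if moreover `κ < 1` then `ϖ = 0`, i.e. `u` is constant. -/
theorem affine_of_harmonic_of_subcritical_growth
    (n : ℕ) (hn : 1 ≤ n) (s : ℝ) (hs : s ∈ Set.Ioo (0 : ℝ) 1)
    (μ : Measure (Metric.sphere (0 : EuclideanSpace ℝ (Fin n)) 1)) [IsFiniteMeasure μ]
    (lam Λ : ℝ) (hlam : 0 < lam) (hΛ : 0 < Λ)
    (hnondeg : ∀ ν : Metric.sphere (0 : EuclideanSpace ℝ (Fin n)) 1,
      lam ≤ ∫ ϑ : Metric.sphere (0 : EuclideanSpace ℝ (Fin n)) 1,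
        |⟪(ν : EuclideanSpace ℝ (Fin n)), (ϑ : EuclideanSpace ℝ (Fin n))⟫| ^ (2 * s) ∂μ)
    (hμΛ : μ Set.univ ≤ ENNReal.ofReal Λ)
    (u : EuclideanSpace ℝ (Fin n) → ℝ) (hu : ContDiff ℝ 2 u)
    (heq : ∀ x, opI n s μ u x = 0)
    (K κ : ℝ) (hK : 0 ≤ K) (hκ0 : 0 ≤ κ) (hκ : κ < 2 * s)
    (hgrowth : ∀ x, |u x| ≤ K * (1 + ‖x‖ ^ κ)) :
    ∃ (ϖ : EuclideanSpace ℝ (Fin n)) (c : ℝ),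
      (∀ x, u x = ⟪ϖ, x⟫ + c) ∧ (κ < 1 → ϖ = 0) := by
  obtain ⟨hs0, hs1⟩ := hs
  have hnd : ∀ ξ : EuclideanSpace ℝ (Fin n), ξ ≠ 0 →
      ¬ ∀ᵐ ϑ : Metric.sphere (0 : EuclideanSpace ℝ (Fin n)) 1 ∂μ,
        ⟪(ϑ : EuclideanSpace ℝ (Fin n)), ξ⟫ = 0 := by
    intro ξ hξ h
    have h1 := hnondeg ⟨‖ξ‖⁻¹ • ξ, by simp [norm_smul, hξ]⟩
    rw [integral_eq_zero_of_ae] at h1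
    · exact hlam.not_ge h1
    · filter_upwards [h] with ϑ hϑ
      rw [real_inner_smul_left, real_inner_comm, hϑ, mul_zero, abs_zero,
        Real.zero_rpow (by positivity), Pi.zero_apply]
  have : Nonempty (Fin n) := ⟨⟨0, hn⟩⟩
  have hμ0 : μ ≠ 0 := by
    rintro rfl
    obtain ⟨ξ, hξ⟩ := exists_ne (0 : EuclideanSpace ℝ (Fin n))
    exact hnd ξ hξ (by simp)
  have hfin := isFiniteMeasure_largeJumps (μ := μ) hs0
  have hpos : 0 < (largeJumps s μ).real Set.univ := by
    have : NeZero (largeJumps s μ) := ⟨largeJumps_ne_zero hμ0⟩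
    exact measureReal_univ_pos
  have hv : ContDiff ℝ 2 fun x ↦ (u x : ℂ) := Complex.ofRealCLM.contDiff.comp hu
  have hg : ∃ C, ∀ x, ‖(u x : ℂ)‖ ≤ C * (1 + ‖x‖) ^ κ := by
    refine ⟨K * 2, fun x ↦ ?_⟩
    rw [Complex.norm_real, Real.norm_eq_abs, mul_assoc, two_mul]
    refine (hgrowth x).trans ?_
    gcongr
    · exact one_le_one_add_norm_rpow hκ0 x
    · linarith
  have hzero : ∀ x, ∫ y, secondDiff (fun x ↦ (u x : ℂ)) y x ∂levyMeasure s μ = 0 := by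
    intro x
    have hc := hu.continuous
    rw [integral_levyMeasure (by
      unfold secondDiff
      exact Continuous.aestronglyMeasurable (by fun_prop)), ← Complex.ofReal_zero, ← heq x, opI,
      ← integral_complex_ofReal]
    refine integral_congr_ae (ae_of_all _ fun p ↦ ?_)
    simp only [secondDiff, Complex.real_smul]
    push_cast
    rw [div_eq_inv_mul]
  have hsd := secondDiff_eq_zero_of_harmonic hκ0 (by linarith)
    (integrable_norm_sq_smallJumps (μ := μ) hs1)
    ((ae_restrict_mem Metric.isClosed_closedBall.measurableSet).mono fun y hy ↦ by simpa using hy)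
    (integrable_rpow_largeJumps hκ0 hκ) hpos
    (fun ξ hξ ↦ levySymbol_smallJumps_pos hs1 (hnd ξ hξ)) hv hg
    fun x ↦ integral_smallJumps_add_symmConv_largeJumps hs0 hs1 hκ0 hκ hv hg (hzero x)
  obtain ⟨ϖ, c, hϖ⟩ := exists_affine_of_secondDiff_eq_zero hu.continuous fun h x ↦ by
    have := hsd h x
    simp only [secondDiff] at this
    exact_mod_cast this
  exact ⟨ϖ, c, hϖ, fun hκ1 ↦ eq_zero_of_abs_inner_add_le hκ1 fun x ↦ hϖ x ▸ hgrowth x⟩
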